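/- arXiv:cs/0110010 — 5 statements merged into one kernel-verified Lean document; each statement's English description precedes it below -/
import Mathlib

section
/- For any initialized pair (v₀,v) of clock valuations and any δ ≥ 0: (1) if δ ≤ 1 then v has at most 4(k+1) pattern changes for δ (i.e., if v has n pattern changes for δ then n ≤ 4(k+1)); (2) if δ ≥ 1 then v has at least one pattern change for δ; (3) if v has no pattern change for δ then int(v) = int(v+δ). -/
open scoped BigOperators

namespace PTApaper

/-! ## Clock valuations -/

/-- A (raw) clock valuation on clocks `x_0, …, x_k`. -/
abbrev Val (k : ℕ) := Fin (k+1) → ℝ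

/-- A discrete clock valuation. -/
abbrev DVal (k : ℕ) := Fin (k+1) → ℕ

/-- A clock valuation takes nonnegative values. -/
def IsVal {k : ℕ} (v : Val k) : Prop := ∀ i, 0 ≤ v i

/-- A valuation is initial if the auxiliary clock `x_0` has value 0. -/
def Initial {k : ℕ} (v : Val k) : Prop := v 0 = 0

/-- The integral part `int(v)` of a valuation. -/
noncomputable def intPart {k : ℕ} (v : Val k) : DVal k := fun i => (⌊v i⌋).toNat

/-- The fractional parts of the relative representation `rel(v)`:
`fract(rel(v))(0) = fract (1 - fract (v 0))` and
`fract(rel(v))(i) = fract (fract (v i) + fract(rel(v))(0))` for `i ∈ K⁺`. -/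
noncomputable def relFract {k : ℕ} (v : Val k) : Fin (k+1) → ℝ := fun i =>
  if i = 0 then Int.fract (1 - Int.fract (v 0))
  else Int.fract (Int.fract (v i) + Int.fract (1 - Int.fract (v 0)))

/-- Synchronous clock progress `v + δ`. -/
def shift {k : ℕ} (v : Val k) (δ : ℝ) : Val k := fun i => v i + δ

/-- Clock reset `v↓_r`. -/
def resetVal {k : ℕ} (r : Finset (Fin (k+1))) (v : Val k) : Val k :=
  fun i => if i ∈ r then 0 else v i

/-! ## Patterns -/

/-- A raw pattern: a finite sequence of subsets of `K⁰ ∪ K¹`, where the index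
`(i, false)` stands for `i⁰` and `(i, true)` stands for `i¹`. -/
abbrev PatSeq (k : ℕ) := List (Finset (Fin (k+1) × Bool))

/-- The well-formedness conditions making `η = p₀,…,p_n` a pattern:
`0 ≤ n < 2(k+1)`, the `p_m` are nonempty and pairwise disjoint, `0⁰ ∈ p₀`,
and `p₀ ∪ … ∪ p_n = K⁰ ∪ K¹`. -/
def IsPattern {k : ℕ} (η : PatSeq k) : Prop :=
  η.length ≤ 2*(k+1) ∧
  (∀ p ∈ η, p.Nonempty) ∧
  η.Pairwise Disjoint ∧
  ((0 : Fin (k+1)), false) ∈ η.getD 0 ∅ ∧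
  (∀ x : Fin (k+1) × Bool, ∃ p ∈ η, x ∈ p)

/-- `bval v₀ v₁ b` is `v_b`. -/
def bval {k : ℕ} (v₀ v₁ : Val k) : Bool → Val k
  | false => v₀
  | true => v₁

/-- The defining ordering condition for "`(v₀,v₁)` has pattern `η = p₀,…,p_n`":
for all positions `m, m'`, copies `b, b'` and clocks `i, i'` with `i^b ∈ p_m` and
`i'^{b'} ∈ p_{m'}`, `fract(rel(v_b))(i) = fract(rel(v_{b'}))(i')` iff `m = m'`, and
`fract(rel(v_b))(i) < fract(rel(v_{b'}))(i')` iff `m < m'`. -/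
def HasPatternOrd {k : ℕ} (v₀ v₁ : Val k) (η : PatSeq k) : Prop :=
  ∀ m m' : Fin η.length, ∀ b b' : Bool, ∀ i i' : Fin (k+1),
    (i, b) ∈ η.get m → (i', b') ∈ η.get m' →
      ((relFract (bval v₀ v₁ b) i = relFract (bval v₀ v₁ b') i' ↔ m = m') ∧
       (relFract (bval v₀ v₁ b) i < relFract (bval v₀ v₁ b') i' ↔ (m : ℕ) < (m' : ℕ)))

/-- `(v₀,v₁)` has pattern `η` (written `[(v₀,v₁)] = η`). -/
def PatternOf {k : ℕ} (v₀ v₁ : Val k) (η : PatSeq k) : Prop :=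
  IsPattern η ∧ HasPatternOrd v₀ v₁ η

/-- A pattern is initial if it is the pattern of `(v₀,v₀)` for some initial valuation `v₀`. -/
def InitialPattern {k : ℕ} (η : PatSeq k) : Prop :=
  ∃ v₀ : Val k, IsVal v₀ ∧ Initial v₀ ∧ PatternOf v₀ v₀ η

/-- The equivalence `(v₀¹,v₁) ≈ (v₀²,v₂)`: same pattern and same integral parts. -/
def PairEquiv {k : ℕ} (va vb vc vd : Val k) : Prop :=
  (∃ η : PatSeq k, PatternOf va vb η ∧ PatternOf vc vd η) ∧
  intPart va = intPart vc ∧ intPart vb = intPart vd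

/-! ## now-position, Next, next, reset -/

/-- The index of the now-position, i.e. the position containing `0¹`. -/
def nowIdx {k : ℕ} (η : PatSeq k) : ℕ :=
  η.findIdx fun p => decide (((0 : Fin (k+1)), true) ∈ p)

/-- A merge-pattern: the now-position is the singleton `{0¹}`. -/
def IsMergePat {k : ℕ} (η : PatSeq k) : Prop :=
  η.getD (nowIdx η) ∅ = ({((0 : Fin (k+1)), true)} : Finset (Fin (k+1) × Bool))

/-- A split-pattern: a pattern that is not a merge-pattern. -/
def IsSplitPat {k : ℕ} (η : PatSeq k) : Prop := ¬ IsMergePat η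

/-- The next pattern `Next(η)`. -/
def NextPat {k : ℕ} (η : PatSeq k) : PatSeq k :=
  let i := nowIdx η
  if η.getD i ∅ = ({((0 : Fin (k+1)), true)} : Finset (Fin (k+1) × Bool)) then
    -- merge case : `p₀, …, p_{i-1} ∪ {0¹}, p_{i+1}, …, p_n`
    η.take (i-1) ++ [η.getD (i-1) ∅ ∪ {((0 : Fin (k+1)), true)}] ++ η.drop (i+1)
  else if i = 0 then
    -- split case with `i = 0` : `p₀ ∖ {0¹}, p₁, …, p_n, {0¹}`
    (η.getD 0 ∅ \ {((0 : Fin (k+1)), true)}) :: (η.drop 1 ++ [{((0 : Fin (k+1)), true)}])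
  else
    -- split case with `i > 0` : `p₀, …, p_{i-1}, {0¹}, p_i ∖ {0¹}, p_{i+1}, …, p_n`
    η.take i ++ [{((0 : Fin (k+1)), true)}, η.getD i ∅ \ {((0 : Fin (k+1)), true)}]
      ++ η.drop (i+1)

/-- The counter update of `next(η,u)`. -/
def nextD {k : ℕ} (η : PatSeq k) (u : DVal k) : DVal k :=
  let i := nowIdx η
  if η.getD i ∅ = ({((0 : Fin (k+1)), true)} : Finset (Fin (k+1) × Bool)) then
    fun j =>
      if j = 0 then (if i = 1 then u 0 + 1 else u 0)
      else (if (j, true) ∈ η.getD (i-1) ∅ then u j + 1 else u j)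
  else u

/-- `next(η,u)`. -/
def nextPair {k : ℕ} (η : PatSeq k) (u : DVal k) : PatSeq k × DVal k :=
  (NextPat η, nextD η u)

/-- The pattern part of `reset_r(η,u)`: all indices `j¹`, `j ∈ r`, are moved into the
now-position, and entries that become empty are deleted. -/
def ResetPat {k : ℕ} (r : Finset (Fin (k+1))) (η : PatSeq k) : PatSeq k :=
  let r1 : Finset (Fin (k+1) × Bool) := r.image (fun j => (j, true))
  let i := nowIdx η
  (η.mapIdx (fun m p => if m = i then p ∪ r1 else p \ r1)).filter (fun p => decide (p ≠ ∅))

/-- The counter update of `reset_r(η,u)`. -/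
def resetD {k : ℕ} (r : Finset (Fin (k+1))) (u : DVal k) : DVal k :=
  fun j => if j ∈ r then 0 else u j

/-- `reset_r(η,u)`. -/
def resetPair {k : ℕ} (r : Finset (Fin (k+1))) (η : PatSeq k) (u : DVal k) :
    PatSeq k × DVal k :=
  (ResetPat r η, resetD r u)

/-! ## Pattern changes -/

/-- `v` has no pattern change for `δ`. -/
def NoChange {k : ℕ} (v₀ v : Val k) (δ : ℝ) : Prop :=
  ∃ η : PatSeq k, PatternOf v₀ v η ∧
    ∀ δ', 0 ≤ δ' → δ' ≤ δ → PatternOf v₀ (shift v δ') η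

/-- `v` has one pattern change for `δ`. -/
def OneChange {k : ℕ} (v₀ v : Val k) (δ : ℝ) : Prop :=
  ∃ η η' : PatSeq k, PatternOf v₀ v η ∧ PatternOf v₀ (shift v δ) η' ∧
    NextPat η = η' ∧
    ((∀ δ', 0 < δ' → δ' < δ → PatternOf v₀ (shift v δ') η) ∨
     (∀ δ', 0 < δ' → δ' < δ → PatternOf v₀ (shift v δ') η'))

/-- `v` has `n` pattern changes for `δ` (for `n ≥ 1`): `δ = δ₁ + … + δ_n` with each
`δ_j > 0` and `v + δ₁ + … + δ_j` has one pattern change for `δ_{j+1}`. -/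
def NChanges {k : ℕ} (v₀ v : Val k) (n : ℕ) (δ : ℝ) : Prop :=
  ∃ d : ℕ → ℝ, (∀ j < n, 0 < d j) ∧ (∑ j ∈ Finset.range n, d j) = δ ∧
    ∀ j < n, OneChange v₀ (shift v (∑ j' ∈ Finset.range j, d j')) (d j)

/-! ## Clock constraints -/

/-- Comparison operators `<, ≤, =, ≥, >`. -/
inductive CCmp | lt | le | eq | ge | gt

/-- Evaluation of a comparison operator on reals. -/
def CCmp.evalR : CCmp → ℝ → ℝ → Prop
  | .lt, a, b => a < b
  | .le, a, b => a ≤ b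
  | .eq, a, b => a = b
  | .ge, a, b => a ≥ b
  | .gt, a, b => a > b

/-- Clock constraints over the clocks `x_1, …, x_k` (indexed by `Fin k`, clock
`x_{i+1}` for `i : Fin k`): Boolean combinations of `x_i - x_j # d` and `x_i # d`. -/
inductive CC (k : ℕ)
  | diff (i j : Fin k) (op : CCmp) (d : ℕ) : CC k
  | single (i : Fin k) (op : CCmp) (d : ℕ) : CC k
  | not (c : CC k) : CC k
  | and (c₁ c₂ : CC k) : CC k

/-- `v ∈ c` : the valuation `v` satisfies the clock constraint `c`. -/
def CC.sat {k : ℕ} (v : Val k) : CC k → Prop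
  | .diff i j op d => op.evalR (v i.succ - v j.succ) (d : ℝ)
  | .single i op d => op.evalR (v i.succ) (d : ℝ)
  | .not c => ¬ c.sat v
  | .and c₁ c₂ => c₁.sat v ∧ c₂.sat v

/-- The position (in `η`) of an index `x ∈ K⁰ ∪ K¹`. -/
def posOf {k : ℕ} (η : PatSeq k) (x : Fin (k+1) × Bool) : ℕ :=
  η.findIdx fun p => decide (x ∈ p)

/-- The truth value, given by pattern `η`, of the fractional ordering
`fract(x_a) > fract(x_b)`. -/
def fracGtP {k : ℕ} (η : PatSeq k) (a b : Fin (k+1)) : Prop :=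
  let i := posOf η ((0 : Fin (k+1)), true)
  let m₁ := posOf η (a, true)
  let m₂ := posOf η (b, true)
  (m₁ < i ∧ i ≤ m₂) ∨ (m₂ < m₁ ∧ m₁ < i) ∨ (i ≤ m₂ ∧ m₂ < m₁)

/-- The truth value, given by pattern `η`, of `fract(x_a) = fract(x_b)`. -/
def fracEqP {k : ℕ} (η : PatSeq k) (a b : Fin (k+1)) : Prop :=
  posOf η (a, true) = posOf η (b, true)

/-- The truth value, given by pattern `η`, of `fract(x_a) = 0`. -/
def fracZeroP {k : ℕ} (η : PatSeq k) (a : Fin (k+1)) : Prop :=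
  posOf η (a, true) = posOf η ((0 : Fin (k+1)), true)

/-- `u ∈ c^η` : the discrete valuation `u` satisfies the constraint `c^η`, obtained by
rewriting `c` as `I(c)` over integral parts and fractional orderings and substituting the
truth values of the fractional orderings determined by the pattern `η`. -/
def CC.satP {k : ℕ} (η : PatSeq k) (u : DVal k) : CC k → Prop
  | .diff i j op d =>
      let I : ℤ := (u i.succ : ℤ) - (u j.succ : ℤ)
      (match op with
      | .lt => I < d ∨ (I = d ∧ fracGtP η j.succ i.succ)
      | .le => I < d ∨ (I = d ∧ (fracGtP η j.succ i.succ ∨ fracEqP η i.succ j.succ))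
      | .eq => I = d ∧ fracEqP η i.succ j.succ
      | .ge => I > d ∨ (I = d ∧ (fracGtP η i.succ j.succ ∨ fracEqP η i.succ j.succ))
      | .gt => I > d ∨ (I = d ∧ fracGtP η i.succ j.succ))
  | .single i op d =>
      let I : ℤ := (u i.succ : ℤ)
      (match op with
      | .lt => I < d
      | .le => I < d ∨ (I = d ∧ fracZeroP η i.succ)
      | .eq => I = d ∧ fracZeroP η i.succ
      | .ge => I ≥ d
      | .gt => I > d ∨ (I = d ∧ ¬ fracZeroP η i.succ))
  | .not c => ¬ c.satP η u
  | .and c₁ c₂ => c₁.satP η u ∧ c₂.satP η u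

/-! ## Pushdown timed automata -/

/-- A pushdown timed automaton `⟨S, {x₁,…,x_k}, Inv, R, Γ, PD⟩`:
`Inv` assigns an invariant to each state, `R s s' = (Rc s s', Rr s s')` assigns a reset
condition and a set of clock resets (a subset of `K⁺`) to each edge, and
`PD s s' = (PDa s s', PDw s s')` assigns a stack operation to each edge. -/
structure PTA (k : ℕ) (S : Type) (Γ : Type) where
  Inv : S → CC k
  Rc : S → S → CC k
  Rr : S → S → Finset (Fin (k+1))
  hRr : ∀ s s', (0 : Fin (k+1)) ∉ Rr s s'
  PDa : S → S → Γ
  PDw : S → S → List Γ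

/-- A configuration `(s, v, w)` of a PTA. -/
abbrev Config (k : ℕ) (S Γ : Type) := S × Val k × List Γ

/-- The one-step transition relation `→_A` of a PTA. -/
def Step {k : ℕ} {S Γ : Type} (A : PTA k S Γ) (c₁ c₂ : Config k S Γ) : Prop :=
  -- progress transition
  (c₁.1 = c₂.1 ∧ c₁.2.2 = c₂.2.2 ∧
    ∃ δ : ℝ, 0 < δ ∧ c₂.2.1 = shift c₁.2.1 δ ∧
      ∀ δ', 0 ≤ δ' → δ' ≤ δ → (A.Inv c₁.1).sat (shift c₁.2.1 δ')) ∨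
  -- reset transition
  ((A.Inv c₁.1).sat c₁.2.1 ∧ (A.Rc c₁.1 c₂.1).sat c₁.2.1 ∧
    c₂.2.1 = resetVal (A.Rr c₁.1 c₂.1) c₁.2.1 ∧ (A.Inv c₂.1).sat c₂.2.1 ∧
    ∃ w : List Γ, c₁.2.2 = A.PDa c₁.1 c₂.1 :: w ∧ c₂.2.2 = A.PDw c₁.1 c₂.1 ++ w)

/-- `→*_A`, the transitive closure of `→_A`. -/
def Reach {k : ℕ} {S Γ : Type} (A : PTA k S Γ) : Config k S Γ → Config k S Γ → Prop :=
  Relation.TransGen (Step A)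

/-- `(s₀,u₀,w₀) →*_{A,η} (s₁,u₁,w₁)`. -/
def ReachPat {k : ℕ} {S Γ : Type} (A : PTA k S Γ) (η : PatSeq k)
    (s₀ : S) (u₀ : DVal k) (w₀ : List Γ) (s₁ : S) (u₁ : DVal k) (w₁ : List Γ) : Prop :=
  ∃ v₀ v₁ : Val k, IsVal v₀ ∧ IsVal v₁ ∧ v₀ 0 = 0 ∧
    intPart v₀ = u₀ ∧ intPart v₁ = u₁ ∧ PatternOf v₀ v₁ η ∧
    Reach A (s₀, v₀, w₀) (s₁, v₁, w₁)

/-! ## The pattern graph -/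

/-- A configuration `(s, η, u, w)` of the pattern graph. -/
abbrev GConfig (k : ℕ) (S Γ : Type) := S × PatSeq k × DVal k × List Γ

/-- The one-step transition relation `→_G` of the pattern graph `G` of a PTA `A`,
through progress edges, stay edges and reset edges. -/
def GStep {k : ℕ} {S Γ : Type} (A : PTA k S Γ) (c₁ c₂ : GConfig k S Γ) : Prop :=
  -- progress edge
  (c₁.1 = c₂.1 ∧ c₁.2.2.2 = c₂.2.2.2 ∧
    nextPair c₁.2.1 c₁.2.2.1 = (c₂.2.1, c₂.2.2.1) ∧
    (A.Inv c₁.1).satP c₁.2.1 c₁.2.2.1 ∧ (A.Inv c₁.1).satP c₂.2.1 c₂.2.2.1) ∨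
  -- stay edge
  (c₁ = c₂ ∧ IsMergePat c₁.2.1 ∧ (A.Inv c₁.1).satP c₁.2.1 c₁.2.2.1) ∨
  -- reset edge
  (resetPair (A.Rr c₁.1 c₂.1) c₁.2.1 c₁.2.2.1 = (c₂.2.1, c₂.2.2.1) ∧
    ((A.Rc c₁.1 c₂.1).and (A.Inv c₁.1)).satP c₁.2.1 c₁.2.2.1 ∧
    (A.Inv c₂.1).satP c₂.2.1 c₂.2.2.1 ∧
    ∃ w : List Γ, c₁.2.2.2 = A.PDa c₁.1 c₂.1 :: w ∧ c₂.2.2.2 = A.PDw c₁.1 c₂.1 ++ w)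

/-- `→*_G`, the transitive closure of `→_G`. -/
def GReach {k : ℕ} {S Γ : Type} (A : PTA k S Γ) : GConfig k S Γ → GConfig k S Γ → Prop :=
  Relation.TransGen (GStep A)

end PTApaper
namespace PTApaper


/-- the moving index -/
abbrev nw (k : ℕ) : Fin (k+1) × Bool := (0, true)

def Good {k : ℕ} (f : Fin (k+1) × Bool → ℝ) (η : PatSeq k) : Prop :=
  (∀ p ∈ η, p.Nonempty) ∧ (∀ x, ∃ p ∈ η, x ∈ p) ∧
  (∀ p ∈ η, ∀ x ∈ p, ∀ y ∈ p, f x = f y) ∧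
  η.Pairwise (fun p q => ∀ x ∈ p, ∀ y ∈ q, f x < f y)

noncomputable def F {k : ℕ} (v₀ v : Val k) : Fin (k+1) × Bool → ℝ :=
  fun x => relFract (bval v₀ v x.2) x.1

lemma good_of_pattern {k : ℕ} {v₀ v : Val k} {η : PatSeq k} (h : PatternOf v₀ v η) :
    Good (F v₀ v) η := by
  obtain ⟨⟨_, h2, h3, h4, h5⟩, ho⟩ := h
  refine ⟨h2, h5, ?_, ?_⟩
  · intro p hp x hx y hy
    obtain ⟨m, rfl⟩ := List.mem_iff_get.1 hp
    exact (ho m m x.2 y.2 x.1 y.1 hx hy).1.2 rfl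
  · rw [List.pairwise_iff_get]
    intro i j hij x hx y hy
    exact (ho i j x.2 y.2 x.1 y.1 hx hy).2.2 hij

lemma pattern_of_good {k : ℕ} {v₀ v : Val k} {η : PatSeq k} (h : Good (F v₀ v) η)
    (hz : ∀ x, F v₀ v (0, false) ≤ F v₀ v x) : PatternOf v₀ v η := by
  obtain ⟨h1, h2, h3, h4⟩ := h
  have hdisj : η.Pairwise Disjoint := by
    refine h4.imp ?_
    intro p q hpq
    rw [Finset.disjoint_left]
    intro x hx hy
    exact lt_irrefl _ (hpq x hx x hy)
  refine ⟨⟨?_, h1, hdisj, ?_, h2⟩, ?_⟩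
  · have : ∀ l : PatSeq k, (∀ p ∈ l, p.Nonempty) → l.Pairwise Disjoint →
        l.length ≤ (l.foldr (fun a b => a ∪ b) (∅ : Finset (Fin (k+1) × Bool))).card ∧
        ∀ q, (∀ p ∈ l, Disjoint q p) →
          Disjoint q (l.foldr (fun a b => a ∪ b) (∅ : Finset (Fin (k+1) × Bool))) := by
      intro l
      induction l with
      | nil => simp
      | cons a l ih =>
        intro hn hd
        rw [List.pairwise_cons] at hd
        obtain ⟨ih1, ih2⟩ := ih (fun p hp => hn p (List.mem_cons_of_mem _ hp)) hd.2
        constructor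
        · simp only [List.length_cons, List.foldr_cons]
          rw [Finset.card_union_of_disjoint (ih2 a hd.1)]
          have := (hn a List.mem_cons_self).card_pos
          omega
        · intro q hq
          simp only [List.foldr_cons]
          rw [Finset.disjoint_union_right]
          exact ⟨hq a List.mem_cons_self, ih2 q (fun p hp => hq p (List.mem_cons_of_mem _ hp))⟩
    refine (this η h1 hdisj).1.trans ((Finset.card_le_univ _).trans ?_)
    simp [mul_comm]
  · cases η with
    | nil => obtain ⟨p, hp, _⟩ := h2 (0, false); simp at hp
    | cons a l =>
      simp only [List.getD_cons_zero]
      obtain ⟨p, hp, hx⟩ := h2 (0, false)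
      rcases List.mem_cons.1 hp with rfl | hp
      · exact hx
      · obtain ⟨y, hy⟩ := h1 a List.mem_cons_self
        exact absurd ((List.pairwise_cons.1 h4).1 p hp y hy _ hx) (not_lt.2 (hz y))
  · intro m m' b b' i i' hi hi'
    rw [List.pairwise_iff_get] at h4
    change ((F v₀ v (i,b) = F v₀ v (i',b') ↔ _) ∧ (F v₀ v (i,b) < F v₀ v (i',b') ↔ _))
    rcases lt_trichotomy m m' with hm | hm | hm
    · have := h4 m m' hm _ hi _ hi'
      exact ⟨⟨fun h => absurd h this.ne, fun h => absurd h hm.ne⟩, fun _ => hm, fun _ => this⟩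
    · subst hm
      have := h3 _ (List.get_mem η m) _ hi _ hi'
      simp [this]
    · have := h4 m' m hm _ hi' _ hi
      exact ⟨⟨fun h => absurd h this.ne', fun h => absurd h hm.ne'⟩,
        fun h => absurd h this.not_gt, fun h => absurd h (not_lt.2 hm.le)⟩

lemma exists_good {k : ℕ} (f : Fin (k+1) × Bool → ℝ) : ∃ η : PatSeq k, Good f η := by
  classical
  refine ⟨((Finset.univ.image f).sort (· ≤ ·)).map
    (fun r => Finset.univ.filter (fun x => f x = r)), ?_, ?_, ?_, ?_⟩
  · intro p hp
    simp only [List.mem_map, Finset.mem_sort, Finset.mem_image, Finset.mem_univ, true_and] at hp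
    obtain ⟨_, ⟨x, rfl⟩, rfl⟩ := hp
    exact ⟨x, by simp⟩
  · intro x
    refine ⟨_, List.mem_map.2 ⟨f x, by simp, rfl⟩, by simp⟩
  · intro p hp x hx y hy
    obtain ⟨r, _, rfl⟩ := List.mem_map.1 hp
    simp only [Finset.mem_filter, Finset.mem_univ, true_and] at hx hy
    rw [hx, hy]
  · rw [List.pairwise_map]
    refine (Finset.sortedLT_sort _).pairwise.imp ?_
    intro a b hab x hx y hy
    simp only [Finset.mem_filter, Finset.mem_univ, true_and] at hx hy
    rw [hx, hy]; exact hab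

lemma good_congr_order {k : ℕ} {f g : Fin (k+1) × Bool → ℝ} {η : PatSeq k} (h : Good f η)
    (he : ∀ x y, f x = f y → g x = g y) (hl : ∀ x y, f x < f y → g x < g y) : Good g η := by
  obtain ⟨h1, h2, h3, h4⟩ := h
  exact ⟨h1, h2, fun p hp x hx y hy => he _ _ (h3 p hp x hx y hy),
    h4.imp (fun hpq x hx y hy => hl _ _ (hpq x hx y hy))⟩

lemma good_decomp {k : ℕ} {f : Fin (k+1) × Bool → ℝ} {η : PatSeq k} (h : Good f η) :
    ∃ A P B, η = A ++ P :: B ∧ nw k ∈ P ∧ (∀ p ∈ A, nw k ∉ p) ∧ (∀ p ∈ B, nw k ∉ p) := by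
  obtain ⟨h1, h2, h3, h4⟩ := h
  obtain ⟨P, hP, hx⟩ := h2 (nw k)
  obtain ⟨A, B, rfl⟩ := List.append_of_mem hP
  refine ⟨A, P, B, rfl, hx, ?_, ?_⟩
  · intro p hp hn
    exact lt_irrefl _ ((List.pairwise_append.1 h4).2.2 p hp P List.mem_cons_self _ hn _ hx)
  · intro p hp hn
    exact lt_irrefl _ ((List.pairwise_cons.1 (List.pairwise_append.1 h4).2.1).1 p hp _ hx _ hn)

lemma nowIdx_eq {k : ℕ} {A : PatSeq k} {P} {B : PatSeq k} (hP : nw k ∈ P)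
    (hA : ∀ p ∈ A, nw k ∉ p) : nowIdx (A ++ P :: B) = A.length := by
  unfold nowIdx
  induction A with
  | nil => simp [List.findIdx_cons, hP]
  | cons a A ih =>
    have h1 := hA a List.mem_cons_self
    have h2 := ih (fun p hp => hA p (List.mem_cons_of_mem _ hp))
    simp only [List.cons_append, List.findIdx_cons, h1, h2, decide_false, cond_false, List.length_cons]

lemma next_merge {k : ℕ} {A : PatSeq k} {Q} {B : PatSeq k}
    (hA : ∀ p ∈ A ++ [Q], nw k ∉ p) :
    NextPat (A ++ [Q] ++ {nw k} :: B) = A ++ (Q ∪ {nw k}) :: B := by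
  have h := nowIdx_eq (B := B) (Finset.mem_singleton_self (nw k)) hA
  unfold NextPat
  simp only [h]
  simp [List.getD_eq_getElem?_getD, List.drop_append]
  rw [List.drop_eq_nil_of_le (by omega)]
  have : A.length + 1 + 1 - A.length = 2 := by omega
  rw [this]; simp

lemma next_split0 {k : ℕ} {P} {B : PatSeq k} (hP : nw k ∈ P) (hP' : P ≠ {nw k}) :
    NextPat (P :: B) = (P \ {nw k}) :: (B ++ [{nw k}]) := by
  have h := nowIdx_eq (A := []) (B := B) hP (by simp)
  rw [List.nil_append] at h
  unfold NextPat
  simp only [h]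
  simp [hP']

lemma next_split {k : ℕ} {A : PatSeq k} {P} {B : PatSeq k} (hP : nw k ∈ P) (hP' : P ≠ {nw k})
    (hA : ∀ p ∈ A, nw k ∉ p) (hA' : A ≠ []) :
    NextPat (A ++ P :: B) = A ++ {nw k} :: (P \ {nw k}) :: B := by
  have h := nowIdx_eq (B := B) hP hA
  unfold NextPat
  simp only [h]
  simp [List.getD_eq_getElem?_getD, List.drop_append, hP', hA']

lemma shape_merge {k : ℕ} {f : Fin (k+1) × Bool → ℝ} {η : PatSeq k} (h : Good f η)
    (hz : ∀ x, f (0, false) ≤ f x) (hn : ∀ x, x ≠ nw k → f x ≠ f (nw k)) :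
    ∃ A Q B, η = A ++ [Q] ++ {nw k} :: B ∧ (∀ p ∈ A ++ [Q], nw k ∉ p) ∧ (∀ p ∈ B, nw k ∉ p) := by
  obtain ⟨A, P, B, rfl, hP, hA, hB⟩ := good_decomp h
  obtain ⟨h1, h2, h3, h4⟩ := h
  have hPs : P = {nw k} := by
    ext x
    constructor
    · intro hx
      by_contra hne
      exact hn x (by simpa using hne) (h3 P (by simp) _ hx _ hP)
    · intro hx; rw [Finset.mem_singleton.1 hx]; exact hP
  subst hPs
  rcases List.eq_nil_or_concat A with rfl | ⟨A', Q, rfl⟩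
  · exfalso
    obtain ⟨p, hp, hx⟩ := h2 (0, false)
    rcases List.mem_cons.1 hp with rfl | hp
    · simp at hx
    · have := (List.pairwise_cons.1 h4).1 p hp _ hP _ hx
      exact absurd this (not_lt.2 (hz _))
  · rw [List.concat_eq_append] at *
    exact ⟨A', Q, B, rfl, hA, hB⟩

lemma shape_split {k : ℕ} {f : Fin (k+1) × Bool → ℝ} {η : PatSeq k} (h : Good f η)
    (hn : ∃ x, x ≠ nw k ∧ f x = f (nw k)) :
    ∃ A P B, η = A ++ P :: B ∧ nw k ∈ P ∧ P ≠ {nw k} ∧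
      (∀ p ∈ A, nw k ∉ p) ∧ (∀ p ∈ B, nw k ∉ p) := by
  obtain ⟨A, P, B, rfl, hP, hA, hB⟩ := good_decomp h
  obtain ⟨h1, h2, h3, h4⟩ := h
  refine ⟨A, P, B, rfl, hP, ?_, hA, hB⟩
  rintro rfl
  obtain ⟨x, hx, hfx⟩ := hn
  obtain ⟨p, hp, hxp⟩ := h2 x
  rw [List.pairwise_append] at h4
  rcases List.mem_append.1 hp with hp | hp
  · exact absurd hfx (h4.2.2 p hp _ List.mem_cons_self _ hxp _ hP).ne
  · rcases List.mem_cons.1 hp with rfl | hp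
    · exact hx (by simpa using hxp)
    · exact absurd hfx ((List.pairwise_cons.1 h4.2.1).1 p hp _ hP _ hxp).ne'

lemma alt_split {k : ℕ} {f g : Fin (k+1) × Bool → ℝ} {η : PatSeq k} (h : Good f η)
    (hn : ∃ x, x ≠ nw k ∧ f x = f (nw k)) (hg : Good g (NextPat η)) :
    ∀ x, x ≠ nw k → g x ≠ g (nw k) := by
  have hmem : {nw k} ∈ NextPat η := by
    obtain ⟨A, P, B, rfl, hP, hP', hA, hB⟩ := shape_split h hn
    by_cases hA' : A = []
    · subst hA'; rw [List.nil_append, next_split0 hP hP']; simp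
    · rw [next_split hP hP' hA hA']; simp
  intro x hx hgx
  obtain ⟨A, P, B, he, hP, hP', hA, hB⟩ := shape_split hg ⟨x, hx, hgx⟩
  rw [he] at hmem
  rcases List.mem_append.1 hmem with hp | hp
  · exact hA _ hp (by simp)
  · rcases List.mem_cons.1 hp with hp | hp
    · exact hP' hp.symm
    · exact hB _ hp (by simp)

lemma alt_merge {k : ℕ} {f g : Fin (k+1) × Bool → ℝ} {η : PatSeq k} (h : Good f η)
    (hz : ∀ x, f (0, false) ≤ f x) (hn : ∀ x, x ≠ nw k → f x ≠ f (nw k))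
    (hg : Good g (NextPat η)) : ∃ x, x ≠ nw k ∧ g x = g (nw k) := by
  obtain ⟨A, Q, B, rfl, hA, hB⟩ := shape_merge h hz hn
  rw [next_merge hA] at hg
  obtain ⟨q, hq⟩ := h.1 Q (by simp)
  refine ⟨q, ?_, hg.2.2.1 (Q ∪ {nw k}) (by simp) _ (by simp [hq]) _ (by simp)⟩
  rintro rfl
  exact hA Q (by simp) hq

lemma good_split {k : ℕ} {f g : Fin (k+1) × Bool → ℝ} {η : PatSeq k} (h : Good f η)
    (hfg : ∀ x, x ≠ nw k → g x = f x) (hz : f (0, false) < f (nw k))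
    (hn : ∃ x, x ≠ nw k ∧ f x = f (nw k)) (hlt : g (nw k) < f (nw k))
    (hx : ∀ x, x ≠ nw k → f x < g (nw k) ∨ f (nw k) ≤ f x) : Good g (NextPat η) := by
  obtain ⟨A, P, B, rfl, hP, hP', hA, hB⟩ := shape_split h hn
  have hA' : A ≠ [] := by
    rintro rfl
    obtain ⟨p, hp, hx⟩ := h.2.1 (0, false)
    rcases List.mem_cons.1 hp with rfl | hp
    · exact hz.ne (h.2.2.1 p (by simp) _ hx _ hP)
    · exact lt_asymm hz ((List.pairwise_cons.1 h.2.2.2).1 p hp _ hP _ hx)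
  rw [next_split hP hP' hA hA']
  obtain ⟨h1, h2, h3, h4⟩ := h
  have hAne : ∀ p ∈ A, ∀ x ∈ p, x ≠ nw k := fun p hp x hx h => hA p hp (h ▸ hx)
  have hBne : ∀ p ∈ B, ∀ x ∈ p, x ≠ nw k := fun p hp x hx h => hB p hp (h ▸ hx)
  simp only [List.pairwise_append, List.pairwise_cons, List.mem_cons] at h4
  obtain ⟨h4A, ⟨h4P, h4B⟩, h4x⟩ := h4
  refine ⟨?_, ?_, ?_, ?_⟩
  · intro p hp
    simp only [List.mem_append, List.mem_cons] at hp
    rcases hp with hp | rfl | rfl | hp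
    · exact h1 p (by simp [hp])
    · simp
    · rw [Finset.sdiff_nonempty]
      intro hs
      exact hP' (Finset.Subset.antisymm hs (by simpa using hP))
    · exact h1 p (by simp [hp])
  · intro x
    by_cases hxn : x = nw k
    · exact ⟨{nw k}, by simp, by simp [hxn]⟩
    · obtain ⟨p, hp, hxp⟩ := h2 x
      simp only [List.mem_append, List.mem_cons] at hp
      rcases hp with hp | rfl | hp
      · exact ⟨p, by simp [hp], hxp⟩
      · exact ⟨p \ {nw k}, by simp, by simp [hxp, hxn]⟩
      · exact ⟨p, by simp [hp], hxp⟩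
  · intro p hp x hx y hy
    simp only [List.mem_append, List.mem_cons] at hp
    rcases hp with hp | rfl | rfl | hp
    · rw [hfg x (hAne p hp x hx), hfg y (hAne p hp y hy)]
      exact h3 p (by simp [hp]) x hx y hy
    · simp only [Finset.mem_singleton] at hx hy; rw [hx, hy]
    · simp only [Finset.mem_sdiff, Finset.mem_singleton] at hx hy
      rw [hfg x hx.2, hfg y hy.2]
      exact h3 P (by simp) x hx.1 y hy.1
    · rw [hfg x (hBne p hp x hx), hfg y (hBne p hp y hy)]
      exact h3 p (by simp [hp]) x hx y hy
  · simp only [List.pairwise_append, List.pairwise_cons, List.mem_cons]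
    refine ⟨?_, ⟨?_, ?_, ?_⟩, ?_⟩
    · refine h4A.imp_of_mem ?_
      intro p q hp hq hpq x hx y hy
      rw [hfg x (hAne p hp x hx), hfg y (hAne q hq y hy)]
      exact hpq x hx y hy
    · rintro p (rfl | hp) x hx' y hy
      · simp only [Finset.mem_sdiff, Finset.mem_singleton] at hx' hy
        rw [hx', hfg y hy.2, h3 P (by simp) y hy.1 _ hP]; exact hlt
      · simp only [Finset.mem_singleton] at hx'
        rw [hx', hfg y (hBne p hp y hy)]
        exact hlt.trans (h4P p hp _ hP _ hy)
    · intro p hp x hx' y hy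
      simp only [Finset.mem_sdiff, Finset.mem_singleton] at hx'
      rw [hfg x hx'.2, hfg y (hBne p hp y hy)]
      exact h4P p hp _ hx'.1 _ hy
    · refine h4B.imp_of_mem ?_
      intro p q hp hq hpq x hx y hy
      rw [hfg x (hBne p hp x hx), hfg y (hBne q hq y hy)]
      exact hpq x hx y hy
    · rintro p hp q (rfl | rfl | hq) x hx' y hy
      · simp only [Finset.mem_singleton] at hy
        rw [hy, hfg x (hAne p hp x hx')]
        rcases hx x (hAne p hp x hx') with h | h
        · exact h
        · exact absurd (h4x p hp P (Or.inl rfl) x hx' _ hP) (not_lt.2 h)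
      · simp only [Finset.mem_sdiff, Finset.mem_singleton] at hy
        rw [hfg x (hAne p hp x hx'), hfg y hy.2]
        exact h4x p hp P (Or.inl rfl) x hx' _ hy.1
      · rw [hfg x (hAne p hp x hx'), hfg y (hBne q hq y hy)]
        exact h4x p hp q (Or.inr hq) x hx' _ hy

lemma good_split0 {k : ℕ} {f g : Fin (k+1) × Bool → ℝ} {η : PatSeq k} (h : Good f η)
    (hfg : ∀ x, x ≠ nw k → g x = f x) (hz : f (0, false) = f (nw k))
    (hm : ∀ x, f (0, false) ≤ f x)
    (hx : ∀ x, x ≠ nw k → f x < g (nw k)) : Good g (NextPat η) := by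
  obtain ⟨A, P, B, rfl, hP, hP', hA, hB⟩ := shape_split h ⟨(0, false), by simp, hz⟩
  obtain rfl : A = [] := by
    rcases A with _ | ⟨a, A⟩
    · rfl
    · exfalso
      obtain ⟨x, hxa⟩ := h.1 a (by simp)
      have := (List.pairwise_append.1 h.2.2.2).2.2 a (by simp) P (by simp) x hxa _ hP
      rw [← hz] at this
      exact absurd this (not_lt.2 (hm x))
  rw [List.nil_append] at h
  rw [List.nil_append, next_split0 hP hP']
  obtain ⟨h1, h2, h3, h4⟩ := h
  have hBne : ∀ p ∈ B, ∀ x ∈ p, x ≠ nw k := fun p hp x hx h => hB p hp (h ▸ hx)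
  simp only [List.pairwise_cons] at h4
  obtain ⟨h4P, h4B⟩ := h4
  refine ⟨?_, ?_, ?_, ?_⟩
  · intro p hp
    simp only [List.mem_append, List.mem_cons, List.not_mem_nil, or_false] at hp
    rcases hp with rfl | hp | rfl
    · rw [Finset.sdiff_nonempty]
      intro hs
      exact hP' (Finset.Subset.antisymm hs (by simpa using hP))
    · exact h1 p (by simp [hp])
    · simp
  · intro x
    by_cases hxn : x = nw k
    · exact ⟨{nw k}, by simp, by simp [hxn]⟩
    · obtain ⟨p, hp, hxp⟩ := h2 x
      simp only [List.mem_cons] at hp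
      rcases hp with rfl | hp
      · exact ⟨p \ {nw k}, by simp, by simp [hxp, hxn]⟩
      · exact ⟨p, by simp [hp], hxp⟩
  · intro p hp x hx y hy
    simp only [List.mem_append, List.mem_cons, List.not_mem_nil, or_false] at hp
    rcases hp with rfl | hp | rfl
    · simp only [Finset.mem_sdiff, Finset.mem_singleton] at hx hy
      rw [hfg x hx.2, hfg y hy.2]
      exact h3 P (by simp) x hx.1 y hy.1
    · rw [hfg x (hBne p hp x hx), hfg y (hBne p hp y hy)]
      exact h3 p (by simp [hp]) x hx y hy
    · simp only [Finset.mem_singleton] at hx hy; rw [hx, hy]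
  · simp only [List.pairwise_append, List.pairwise_cons, List.mem_cons, List.mem_append,
      List.not_mem_nil, or_false]
    refine ⟨?_, ?_, ?_, ?_⟩
    · rintro p (hp | rfl) x hx' y hy
      · simp only [Finset.mem_sdiff, Finset.mem_singleton] at hx'
        rw [hfg x hx'.2, hfg y (hBne p hp y hy)]
        exact h4P p hp _ hx'.1 _ hy
      · simp only [Finset.mem_sdiff, Finset.mem_singleton] at hx' hy
        rw [hy, hfg x hx'.2]; exact hx x hx'.2
    · refine h4B.imp_of_mem ?_
      intro p q hp hq hpq x hx y hy
      rw [hfg x (hBne p hp x hx), hfg y (hBne q hq y hy)]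
      exact hpq x hx y hy
    · simp
    · rintro p hp q rfl x hx' y hy
      simp only [Finset.mem_singleton] at hy
      rw [hy, hfg x (hBne p hp x hx')]
      exact hx x (hBne p hp x hx')

lemma good_merge {k : ℕ} {f g : Fin (k+1) × Bool → ℝ} {η : PatSeq k} (h : Good f η)
    (hfg : ∀ x, x ≠ nw k → g x = f x) (hm : ∀ x, f (0, false) ≤ f x)
    (z : Fin (k+1) × Bool) (hz : z ≠ nw k) (hgz : g (nw k) = f z) (hzn : f z < f (nw k))
    (hx : ∀ x, x ≠ nw k → f x ≤ f z ∨ f (nw k) < f x) : Good g (NextPat η) := by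
  have hn : ∀ x, x ≠ nw k → f x ≠ f (nw k) := by
    intro x hxn
    rcases hx x hxn with h | h
    · exact (h.trans_lt hzn).ne
    · exact h.ne'
  obtain ⟨A, Q, B, rfl, hA, hB⟩ := shape_merge h hm hn
  rw [next_merge hA]
  obtain ⟨h1, h2, h3, h4⟩ := h
  have hAne : ∀ p ∈ A, ∀ x ∈ p, x ≠ nw k := fun p hp x hx h => hA p (by simp [hp]) (h ▸ hx)
  have hQne : ∀ x ∈ Q, x ≠ nw k := fun x hx h => hA Q (by simp) (h ▸ hx)
  have hBne : ∀ p ∈ B, ∀ x ∈ p, x ≠ nw k := fun p hp x hx h => hB p hp (h ▸ hx)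
  simp only [List.append_assoc, List.singleton_append, List.pairwise_append, List.pairwise_cons,
    List.mem_cons] at h4
  obtain ⟨h4A, ⟨h4Q, h4P, h4B⟩, h4x⟩ := h4
  have hzQ : z ∈ Q := by
    obtain ⟨p, hp, hzp⟩ := h2 z
    obtain ⟨q, hq⟩ := h1 Q (by simp)
    simp only [List.mem_append, List.mem_cons, List.not_mem_nil, or_false] at hp
    rcases hp with (hp | rfl) | rfl | hp
    · have e1 := h4x p hp Q (Or.inl rfl) z hzp q hq
      have e2 := h4Q _ (Or.inl rfl) q hq (nw k) (by simp)
      rcases hx q (hQne q hq) with h | h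
      · exact absurd e1 (not_lt.2 h)
      · exact absurd e2 (not_lt.2 h.le)
    · exact hzp
    · exact absurd (by simpa using hzp) hz
    · exact absurd (h4P p hp (nw k) (by simp) z hzp) (not_lt.2 hzn.le)
  have hgQ : ∀ x ∈ Q ∪ {nw k}, g x = f z := by
    intro x hx
    rcases Finset.mem_union.1 hx with hx | hx
    · rw [hfg x (hQne x hx)]; exact h3 Q (by simp) _ hx _ hzQ
    · rw [Finset.mem_singleton.1 hx, hgz]
  refine ⟨?_, ?_, ?_, ?_⟩
  · intro p hp
    simp only [List.mem_append, List.mem_cons] at hp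
    rcases hp with hp | rfl | hp
    · exact h1 p (by simp [hp])
    · exact ⟨z, by simp [hzQ]⟩
    · exact h1 p (by simp [hp])
  · intro x
    obtain ⟨p, hp, hxp⟩ := h2 x
    simp only [List.mem_append, List.mem_cons, List.not_mem_nil, or_false] at hp
    rcases hp with (hp | rfl) | rfl | hp
    · exact ⟨p, by simp [hp], hxp⟩
    · exact ⟨p ∪ {nw k}, by simp, by simp [hxp]⟩
    · exact ⟨Q ∪ {nw k}, by simp, Finset.mem_union_right _ hxp⟩
    · exact ⟨p, by simp [hp], hxp⟩
  · intro p hp x hx y hy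
    simp only [List.mem_append, List.mem_cons] at hp
    rcases hp with hp | rfl | hp
    · rw [hfg x (hAne p hp x hx), hfg y (hAne p hp y hy)]
      exact h3 p (by simp [hp]) x hx y hy
    · rw [hgQ x hx, hgQ y hy]
    · rw [hfg x (hBne p hp x hx), hfg y (hBne p hp y hy)]
      exact h3 p (by simp [hp]) x hx y hy
  · simp only [List.pairwise_append, List.pairwise_cons, List.mem_cons]
    refine ⟨?_, ⟨?_, ?_⟩, ?_⟩
    · refine h4A.imp_of_mem ?_
      intro p q hp hq hpq x hx y hy
      rw [hfg x (hAne p hp x hx), hfg y (hAne q hq y hy)]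
      exact hpq x hx y hy
    · intro p hp x hx' y hy
      rw [hgQ x hx', hfg y (hBne p hp y hy)]
      exact h4Q p (Or.inr hp) _ hzQ _ hy
    · refine h4B.imp_of_mem ?_
      intro p q hp hq hpq x hx y hy
      rw [hfg x (hBne p hp x hx), hfg y (hBne q hq y hy)]
      exact hpq x hx y hy
    · rintro p hp q (rfl | hq) x hx' y hy
      · rw [hgQ y hy, hfg x (hAne p hp x hx')]
        exact h4x p hp Q (Or.inl rfl) x hx' _ hzQ
      · rw [hfg x (hAne p hp x hx'), hfg y (hBne q hq y hy)]
        exact h4x p hp q (Or.inr (Or.inr hq)) x hx' _ hy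

lemma good_same {k : ℕ} {f g : Fin (k+1) × Bool → ℝ} {η : PatSeq k} (h : Good f η)
    (hfg : ∀ x, x ≠ nw k → g x = f x) (hle : g (nw k) ≤ f (nw k))
    (hx : ∀ x, x ≠ nw k → f x < g (nw k) ∨ f (nw k) < f x) : Good g η := by
  apply good_congr_order h
  · intro x y hxy
    by_cases h1 : x = nw k <;> by_cases h2 : y = nw k
    · rw [h1, h2]
    · rcases hx y h2 with h | h <;> subst h1 <;> linarith
    · rcases hx x h1 with h | h <;> subst h2 <;> linarith
    · rw [hfg x h1, hfg y h2, hxy]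
  · intro x y hxy
    by_cases h1 : x = nw k <;> by_cases h2 : y = nw k
    · subst h1; subst h2; exact absurd hxy (lt_irrefl _)
    · rw [hfg y h2]; subst h1; linarith
    · rw [hfg x h1]; rcases hx x h1 with h | h <;> subst h2 <;> linarith
    · rw [hfg x h1, hfg y h2]; exact hxy

lemma shift_shift {k : ℕ} (v : Val k) (a b : ℝ) : shift (shift v a) b = shift v (a + b) := by
  funext i; simp [shift, add_assoc]

lemma shift_zero {k : ℕ} (v : Val k) : shift v 0 = v := by
  funext i; simp [shift]

lemma fract_aux (a b : ℝ) : Int.fract (Int.fract a + Int.fract (1 - Int.fract b)) =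
    Int.fract (a - b) := by
  rw [Int.fract_eq_fract]
  refine ⟨-⌊a⌋ + 1 + ⌊b⌋ - ⌊1 - Int.fract b⌋, ?_⟩
  push_cast
  have h1 := Int.self_sub_floor a
  have h2 := Int.self_sub_floor b
  have h3 := Int.self_sub_floor (1 - Int.fract b)
  linarith

lemma fract_aux0 (b : ℝ) : Int.fract (1 - Int.fract b) = Int.fract (-b) := by
  rw [Int.fract_eq_fract]
  refine ⟨1 + ⌊b⌋, ?_⟩
  push_cast
  have h2 := Int.self_sub_floor b
  linarith

/-- position of the moving index at time `t` -/
noncomputable def yy {k : ℕ} (v : Val k) (t : ℝ) : ℝ := Int.fract (-(v 0 + t))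

lemma F_nw {k : ℕ} (v₀ v : Val k) (t : ℝ) : F v₀ (shift v t) (nw k) = yy v t := by
  simp [F, bval, relFract, fract_aux0, shift, yy]

lemma F_ne {k : ℕ} (v₀ v : Val k) (t : ℝ) (x : Fin (k+1) × Bool) (hx : x ≠ nw k) :
    F v₀ (shift v t) x = F v₀ v x := by
  obtain ⟨i, b⟩ := x
  cases b
  · rfl
  · have : i ≠ 0 := by rintro rfl; exact hx rfl
    simp [F, bval, relFract, this, fract_aux, shift]

lemma F_tt {k : ℕ} (v₀ v : Val k) (i : Fin (k+1)) (hi : i ≠ 0) :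
    F v₀ v (i, true) = Int.fract (v i - v 0) := by
  simp [F, bval, relFract, hi, fract_aux]

lemma F_zero {k : ℕ} (v₀ v : Val k) (h : Initial v₀) : F v₀ v (0, false) = 0 := by
  unfold Initial at h
  simp [F, bval, relFract, h]

lemma F_nonneg {k : ℕ} (v₀ v : Val k) (x) : 0 ≤ F v₀ v x := by
  unfold F relFract; split_ifs <;> exact Int.fract_nonneg _

lemma F_lt {k : ℕ} (v₀ v : Val k) (x) : F v₀ v x < 1 := by
  unfold F relFract; split_ifs <;> exact Int.fract_lt_one _

lemma F_min {k : ℕ} (v₀ v : Val k) (h : Initial v₀) (x) : F v₀ v (0, false) ≤ F v₀ v x := by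
  rw [F_zero _ _ h]; exact F_nonneg _ _ _

lemma yy_sub {k : ℕ} (v : Val k) (s u : ℝ) (h0 : 0 ≤ u) (h1 : u ≤ yy v s) :
    yy v (s + u) = yy v s - u := by
  have hl : yy v s < 1 := Int.fract_lt_one _
  unfold yy
  rw [Int.fract_eq_iff]
  refine ⟨sub_nonneg.2 h1, by unfold yy at hl; linarith, ⌊-(v 0 + s)⌋, ?_⟩
  have := Int.self_sub_floor (-(v 0 + s))
  linarith

lemma yy_wrap {k : ℕ} (v : Val k) (s u : ℝ) (hs : yy v s = 0) (h0 : 0 < u) (h1 : u ≤ 1) :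
    yy v (s + u) = 1 - u := by
  unfold yy at *
  rw [Int.fract_eq_iff]
  refine ⟨by linarith, by linarith, ⌊-(v 0 + s)⌋ - 1, ?_⟩
  have := Int.self_sub_floor (-(v 0 + s))
  push_cast
  linarith

lemma yy_inj {k : ℕ} (v : Val k) (s t : ℝ) (h : yy v s = yy v t) (h1 : s ≤ t) (h2 : t < s + 1) :
    s = t := by
  unfold yy at h
  rw [Int.fract_eq_fract] at h
  obtain ⟨z, hz⟩ := h
  have e : (z : ℝ) = t - s := by linarith
  have h3 : (0 : ℝ) ≤ z := by linarith
  have h4 : (z : ℝ) < 1 := by linarith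
  have h5 : (0 : ℤ) ≤ z := by exact_mod_cast h3
  have h6 : z < 1 := by exact_mod_cast h4
  have : z = 0 := by omega
  rw [this] at e
  push_cast at e
  linarith

def Crit {k : ℕ} (v₀ v : Val k) (t : ℝ) : Prop := ∃ x, x ≠ nw k ∧ F v₀ v x = yy v t

lemma crit_iff {k : ℕ} (v₀ v : Val k) (t : ℝ) : Crit v₀ v t ↔
    ∃ x, x ≠ nw k ∧ F v₀ (shift v t) x = F v₀ (shift v t) (nw k) := by
  unfold Crit
  refine exists_congr fun x => and_congr_right fun hx => ?_
  rw [F_ne _ _ _ _ hx, F_nw]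

lemma lt_of_noncrit {k : ℕ} {v₀ v : Val k} (h0 : Initial v₀) {s t : ℝ} (hst : s ≤ t)
    (hc : ∀ r, s ≤ r → r < t → ¬ Crit v₀ v r) : t - s ≤ yy v s := by
  by_contra hlt
  push Not at hlt
  have hy : 0 ≤ yy v s := Int.fract_nonneg _
  refine hc (s + yy v s) (by linarith) (by linarith) ⟨(0, false), by simp, ?_⟩
  rw [yy_sub v s _ hy le_rfl, F_zero _ _ h0, sub_self]

lemma step_same {k : ℕ} {v₀ v : Val k} (h0 : Initial v₀) {s t : ℝ} (hst : s ≤ t)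
    (hc : ∀ r, s ≤ r → r ≤ t → ¬ Crit v₀ v r) {η : PatSeq k} (h : PatternOf v₀ (shift v s) η) :
    PatternOf v₀ (shift v t) η := by
  have h1 := lt_of_noncrit h0 hst (fun r hr hr' => hc r hr hr'.le)
  have h2 := yy_sub v s (t - s) (by linarith) h1
  rw [add_sub_cancel] at h2
  refine pattern_of_good (good_same (good_of_pattern h) ?_ ?_ ?_) (F_min _ _ h0)
  · intro x hx; rw [F_ne _ _ _ _ hx, F_ne _ _ _ _ hx]
  · rw [F_nw, F_nw]; linarith
  · intro x hx
    rw [F_nw, F_nw, F_ne _ _ _ _ hx]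
    by_contra hh
    push Not at hh
    refine hc (s + (yy v s - F v₀ v x)) (by linarith) (by linarith) ⟨x, hx, ?_⟩
    rw [yy_sub v s _ (by linarith) (by linarith [F_nonneg v₀ v x])]; ring

lemma step_merge {k : ℕ} {v₀ v : Val k} (h0 : Initial v₀) {s t : ℝ} (hst : s < t)
    (hc : ∀ r, s ≤ r → r < t → ¬ Crit v₀ v r) (ht : Crit v₀ v t)
    {η : PatSeq k} (h : PatternOf v₀ (shift v s) η) :
    PatternOf v₀ (shift v t) (NextPat η) := by
  have h1 := lt_of_noncrit h0 hst.le hc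
  have h2 := yy_sub v s (t - s) (by linarith) h1
  rw [add_sub_cancel] at h2
  obtain ⟨z, hz, hzt⟩ := ht
  refine pattern_of_good (good_merge (good_of_pattern h) ?_ (F_min _ _ h0) z hz ?_ ?_ ?_)
    (F_min _ _ h0)
  · intro x hx; rw [F_ne _ _ _ _ hx, F_ne _ _ _ _ hx]
  · rw [F_nw, F_ne _ _ _ _ hz, hzt]
  · rw [F_nw, F_ne _ _ _ _ hz, hzt]; linarith
  · intro x hx
    rw [F_nw, F_ne _ _ _ _ hx, F_ne _ _ _ _ hz]
    by_contra hh
    push Not at hh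
    refine hc (s + (yy v s - F v₀ v x)) (by linarith) (by linarith) ⟨x, hx, ?_⟩
    rw [yy_sub v s _ (by linarith) (by linarith [F_nonneg v₀ v x])]; ring

lemma step_split {k : ℕ} {v₀ v : Val k} (h0 : Initial v₀) {s t : ℝ} (hst : s < t)
    (hs : Crit v₀ v s) (hc : ∀ r, s < r → r ≤ t → ¬ Crit v₀ v r)
    {η : PatSeq k} (h : PatternOf v₀ (shift v s) η) :
    PatternOf v₀ (shift v t) (NextPat η) := by
  have hy : 0 ≤ yy v s := Int.fract_nonneg _
  have hfg : ∀ x, x ≠ nw k → F v₀ (shift v t) x = F v₀ (shift v s) x := by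
    intro x hx; rw [F_ne _ _ _ _ hx, F_ne _ _ _ _ hx]
  refine pattern_of_good ?_ (F_min _ _ h0)
  rcases hy.eq_or_lt with he | he
  · have h1 : t - s < 1 := by
      by_contra hlt
      push Not at hlt
      refine hc (s + 1) (by linarith) (by linarith) ⟨(0, false), by simp, ?_⟩
      rw [yy_wrap v s 1 he.symm one_pos le_rfl, F_zero _ _ h0, sub_self]
    have h2 := yy_wrap v s (t - s) he.symm (by linarith) h1.le
    rw [add_sub_cancel] at h2
    refine good_split0 (good_of_pattern h) hfg ?_ (F_min _ _ h0) ?_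
    · rw [F_nw, ← he, F_zero _ _ h0]
    · intro x hx
      rw [F_nw, F_ne _ _ _ _ hx]
      by_contra hh
      push Not at hh
      have := F_lt v₀ v x
      have := F_nonneg v₀ v x
      refine hc (s + (1 - F v₀ v x)) (by linarith) (by linarith) ⟨x, hx, ?_⟩
      rw [yy_wrap v s _ he.symm (by linarith) (by linarith)]; ring
  · have h1 : t - s < yy v s := by
      by_contra hlt
      push Not at hlt
      refine hc (s + yy v s) (by linarith) (by linarith) ⟨(0, false), by simp, ?_⟩
      rw [yy_sub v s _ hy le_rfl, F_zero _ _ h0, sub_self]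
    have h2 := yy_sub v s (t - s) (by linarith) h1.le
    rw [add_sub_cancel] at h2
    refine good_split (good_of_pattern h) hfg ?_ ((crit_iff _ _ _).1 hs) ?_ ?_
    · rw [F_nw, F_zero _ _ h0]; exact he
    · rw [F_nw, F_nw]; linarith
    · intro x hx
      rw [F_nw, F_nw, F_ne _ _ _ _ hx]
      by_contra hh
      push Not at hh
      refine hc (s + (yy v s - F v₀ v x)) (by linarith) (by linarith) ⟨x, hx, ?_⟩
      rw [yy_sub v s _ (by linarith) (by linarith [F_nonneg v₀ v x])]; ring

lemma exists_pattern {k : ℕ} (v₀ v : Val k) (h0 : Initial v₀) : ∃ η, PatternOf v₀ v η := by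
  obtain ⟨η, h⟩ := exists_good (F v₀ v)
  exact ⟨η, pattern_of_good h (F_min _ _ h0)⟩

lemma one_merge {k : ℕ} {v₀ v : Val k} (h0 : Initial v₀) {s t : ℝ} (hst : s < t)
    (hc : ∀ r, s ≤ r → r < t → ¬ Crit v₀ v r) (ht : Crit v₀ v t) :
    OneChange v₀ (shift v s) (t - s) := by
  obtain ⟨η, h⟩ := exists_pattern v₀ (shift v s) h0
  refine ⟨η, NextPat η, h, ?_, rfl, Or.inl ?_⟩
  · rw [shift_shift, add_sub_cancel]; exact step_merge h0 hst hc ht h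
  · intro d h1 h2
    rw [shift_shift]
    exact step_same h0 (by linarith) (fun r hr hr' => hc r hr (by linarith)) h

lemma one_split {k : ℕ} {v₀ v : Val k} (h0 : Initial v₀) {s t : ℝ} (hst : s < t)
    (hs : Crit v₀ v s) (hc : ∀ r, s < r → r ≤ t → ¬ Crit v₀ v r) :
    OneChange v₀ (shift v s) (t - s) := by
  obtain ⟨η, h⟩ := exists_pattern v₀ (shift v s) h0
  refine ⟨η, NextPat η, h, ?_, rfl, Or.inr ?_⟩
  · rw [shift_shift, add_sub_cancel]; exact step_split h0 hst hs hc h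
  · intro d h1 h2
    rw [shift_shift]
    exact step_split h0 (by linarith) hs (fun r hr hr' => hc r hr (by linarith)) h

lemma nchanges_cons {k : ℕ} {v₀ v : Val k} {d e : ℝ} {n : ℕ} (hd : 0 < d)
    (h1 : OneChange v₀ v d) (h2 : NChanges v₀ (shift v d) n e) : NChanges v₀ v (n+1) (d + e) := by
  obtain ⟨f, hf1, hf2, hf3⟩ := h2
  refine ⟨fun j => Nat.casesOn j d f, ?_, ?_, ?_⟩
  · intro j hj
    cases j with
    | zero => exact hd
    | succ j => exact hf1 j (by omega)
  · rw [Finset.sum_range_succ', ← hf2, add_comm]; rfl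
  · intro j hj
    cases j with
    | zero => simpa [shift_zero] using h1
    | succ j =>
      rw [Finset.sum_range_succ', add_comm, ← shift_shift]
      exact hf3 j (by omega)

lemma nchanges_zero {k : ℕ} (v₀ v : Val k) : NChanges v₀ v 0 0 :=
  ⟨fun _ => 0, by simp, by simp, by simp⟩

lemma chain {k : ℕ} {v₀ v : Val k} {s t u : ℝ} {n : ℕ} (hst : s < t)
    (h1 : OneChange v₀ (shift v s) (t - s)) (h2 : NChanges v₀ (shift v t) n (u - t)) :
    NChanges v₀ (shift v s) (n+1) (u - s) := by
  have : u - s = (t - s) + (u - t) := by ring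
  rw [this]
  refine nchanges_cons (by linarith) h1 ?_
  rwa [shift_shift, add_sub_cancel]

lemma crit_finite {k : ℕ} (v₀ v : Val k) (δ : ℝ) : {t | 0 ≤ t ∧ t ≤ δ ∧ Crit v₀ v t}.Finite := by
  refine Set.Finite.subset (Set.Finite.image (fun p : (Fin (k+1) × Bool) × ℤ =>
    -(v 0) - F v₀ v p.1 - p.2) (Set.Finite.prod (Set.finite_univ)
      (Set.finite_Icc ⌊-(v 0 + δ)⌋ ⌊-(v 0 + 0)⌋))) ?_
  rintro t ⟨h0, h1, x, _, hx⟩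
  refine ⟨(x, ⌊-(v 0 + t)⌋), ⟨Set.mem_univ _, ?_, ?_⟩, ?_⟩
  · exact Int.floor_le_floor (by linarith)
  · exact Int.floor_le_floor (by linarith)
  · simp only
    rw [hx]; unfold yy
    have := Int.self_sub_floor (-(v 0 + t))
    linarith

lemma first_crit {k : ℕ} {v₀ v : Val k} {s t : ℝ} (h0 : 0 ≤ s)
    (h : ∃ r, s < r ∧ r ≤ t ∧ Crit v₀ v r) :
    ∃ c, s < c ∧ c ≤ t ∧ Crit v₀ v c ∧ ∀ r, s < r → r < c → ¬ Crit v₀ v r := by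
  have hf : {r | s < r ∧ r ≤ t ∧ Crit v₀ v r}.Finite :=
    (crit_finite v₀ v t).subset (fun r hr => ⟨by linarith [hr.1], hr.2⟩)
  obtain ⟨c, hc, hm⟩ := Set.exists_min_image _ id hf h
  refine ⟨c, hc.1, hc.2.1, hc.2.2, fun r h1 h2 h3 => ?_⟩
  have := hm r ⟨h1, by linarith [hc.2.1], h3⟩
  simp only [id] at this
  linarith

lemma from_crit {k : ℕ} {v₀ v : Val k} (h0 : Initial v₀) (t : ℝ) : ∀ N : ℕ, ∀ s, 0 ≤ s → s < t →
    Crit v₀ v s → {r | s < r ∧ r ≤ t ∧ Crit v₀ v r}.ncard = N →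
    ∃ n, 1 ≤ n ∧ NChanges v₀ (shift v s) n (t - s) := by
  intro N
  induction N using Nat.strong_induction_on with
  | _ N ih =>
  intro s hs0 hst hs hN
  by_cases h : ∃ r, s < r ∧ r ≤ t ∧ Crit v₀ v r
  · obtain ⟨c, h1, h2, h3, h4⟩ := first_crit hs0 h
    have e1 : OneChange v₀ (shift v s) ((s + c) / 2 - s) :=
      one_split h0 (by linarith) hs (fun r hr hr' => h4 r hr (by linarith))
    have e2 : OneChange v₀ (shift v ((s + c) / 2)) (c - (s + c) / 2) :=
      one_merge h0 (by linarith) (fun r hr hr' => h4 r (by linarith) hr') h3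
    have e3 : ∃ n, NChanges v₀ (shift v c) n (t - c) := by
      rcases h2.eq_or_lt with rfl | h2
      · exact ⟨0, by rw [sub_self]; exact nchanges_zero _ _⟩
      · have hlt : {r | c < r ∧ r ≤ t ∧ Crit v₀ v r}.ncard < N := by
          rw [← hN]
          refine Set.ncard_lt_ncard ?_ ((crit_finite v₀ v t).subset
            (fun r hr => ⟨by linarith [hr.1], hr.2⟩))
          refine ⟨fun r hr => ⟨h1.trans hr.1, hr.2⟩, fun hh => ?_⟩
          exact lt_irrefl _ (hh (show c ∈ _ from ⟨h1, h2.le, h3⟩)).1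
        obtain ⟨n, _, hn⟩ := ih _ hlt c (by linarith) h2 h3 rfl
        exact ⟨n, hn⟩
    obtain ⟨n, hn⟩ := e3
    exact ⟨_, by omega, chain (by linarith) e1 (chain (by linarith) e2 hn)⟩
  · push Not at h
    refine ⟨1, le_rfl, chain hst (one_split h0 hst hs h) ?_⟩
    rw [sub_self]; exact nchanges_zero _ _

lemma part2 {k : ℕ} {v₀ v : Val k} (h0 : Initial v₀) {δ : ℝ} (hδ : 1 ≤ δ) :
    ∃ n : ℕ, 1 ≤ n ∧ NChanges v₀ v n δ := by
  have key : ∃ n : ℕ, 1 ≤ n ∧ NChanges v₀ (shift v 0) n (δ - 0) := by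
    by_cases hc : Crit v₀ v 0
    · exact from_crit h0 δ _ 0 le_rfl (by linarith) hc rfl
    · have hy : 0 ≤ yy v 0 := Int.fract_nonneg _
      have hy1 : yy v 0 < 1 := Int.fract_lt_one _
      have hcr : Crit v₀ v (0 + yy v 0) := by
        refine ⟨(0, false), by simp, ?_⟩
        rw [yy_sub v 0 _ hy le_rfl, F_zero _ _ h0, sub_self]
      have hpos : 0 < yy v 0 := by
        rcases hy.eq_or_lt with h | h
        · rw [← h, add_zero] at hcr; exact absurd hcr hc
        · exact h
      obtain ⟨c, h1, h2, h3, h4⟩ := first_crit (t := δ) le_rfl ⟨_, by linarith, by linarith, hcr⟩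
      have e2 : OneChange v₀ (shift v 0) (c - 0) := by
        refine one_merge h0 h1 (fun r hr hr' => ?_) h3
        rcases hr.eq_or_lt with rfl | hr
        · exact hc
        · exact h4 r hr hr'
      rcases h2.eq_or_lt with rfl | h2
      · exact ⟨_, le_rfl, chain h1 e2 (by rw [sub_self]; exact nchanges_zero _ _)⟩
      · obtain ⟨n, _, hn⟩ := from_crit h0 δ _ c h1.le h2 h3 rfl
        exact ⟨_, by omega, chain h1 e2 hn⟩
  simpa [shift_zero] using key

lemma part3 {k : ℕ} {v₀ v : Val k} (h0 : Initial v₀) {δ : ℝ} (hδ : 0 ≤ δ)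
    (h : NoChange v₀ v δ) : intPart v = intPart (shift v δ) := by
  rcases hδ.eq_or_lt with rfl | hpos
  · rw [shift_zero]
  obtain ⟨η, _, hp⟩ := h
  have hnc : ∀ t, 0 ≤ t → t ≤ δ → ¬ Crit v₀ v t := by
    intro t ht ht' hc
    have hg := good_of_pattern (hp t ht ht')
    obtain ⟨A, P, B, rfl, hP, hP', -, -⟩ := shape_split hg ((crit_iff _ _ _).1 hc)
    obtain ⟨x, hx, hxn⟩ : ∃ x ∈ P, x ≠ nw k := by
      by_contra hh
      push Not at hh
      exact hP' (Finset.Subset.antisymm (fun x hx => by simp [hh x hx]) (by simpa using hP))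
    have key : ∀ s, 0 ≤ s → s ≤ δ → F v₀ v x = yy v s := by
      intro s hs hs'
      have hg := (good_of_pattern (hp s hs hs')).2.2.1 P (by simp) x hx _ hP
      rwa [F_ne _ _ _ _ hxn, F_nw] at hg
    have h1 := key 0 le_rfl hδ
    have h2 := key (min δ (1/2)) (le_min hδ (by norm_num)) (min_le_left _ _)
    have := yy_inj v 0 (min δ (1/2)) (h1.symm.trans h2) (le_min hδ (by norm_num))
      (by linarith [min_le_right δ (1/2)])
    have := lt_min hpos (show (0:ℝ) < 1/2 by norm_num)
    linarith
  funext i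
  have : ⌊v i⌋ = ⌊v i + δ⌋ := by
    refine le_antisymm (Int.floor_le_floor (by linarith)) ?_
    by_contra hlt
    push Not at hlt
    have h1 : (⌊v i⌋ + 1 : ℝ) ≤ v i + δ := by
      have : ⌊v i⌋ + 1 ≤ ⌊v i + δ⌋ := hlt
      have := Int.le_floor.1 this
      push_cast at this
      exact this
    have h2 := Int.lt_floor_add_one (v i)
    refine hnc (⌊v i⌋ + 1 - v i) (by linarith) (by linarith) ?_
    by_cases hi : i = 0
    · subst hi
      refine ⟨(0, false), by simp, ?_⟩
      rw [F_zero _ _ h0]; unfold yy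
      symm
      rw [Int.fract_eq_iff]
      exact ⟨le_rfl, one_pos, -(⌊v 0⌋ + 1), by push_cast; ring⟩
    · refine ⟨(i, true), by simp [hi], ?_⟩
      rw [F_tt _ _ _ hi]; unfold yy
      rw [Int.fract_eq_fract]
      exact ⟨⌊v i⌋ + 1, by push_cast; ring⟩
  simp [intPart, shift, this]

lemma one_alt {k : ℕ} {v₀ v : Val k} (h0 : Initial v₀) {s d : ℝ}
    (h : OneChange v₀ (shift v s) d) : Crit v₀ v (s + d) ↔ ¬ Crit v₀ v s := by
  obtain ⟨η, _, h1, h2, rfl, -⟩ := h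
  rw [shift_shift] at h2
  rw [crit_iff, crit_iff]
  constructor
  · rintro ⟨x, hx, hxe⟩ hs
    exact alt_split (good_of_pattern h1) hs (good_of_pattern h2) x hx hxe
  · intro hs
    push Not at hs
    exact alt_merge (good_of_pattern h1) (F_min _ _ h0) hs (good_of_pattern h2)

lemma part1 {k : ℕ} {v₀ v : Val k} (h0 : Initial v₀) {δ : ℝ} (hδ : δ ≤ 1) {n : ℕ}
    (h : NChanges v₀ v n δ) : n ≤ 4 * (k + 1) := by
  obtain ⟨d, hd, hsum, hone⟩ := h
  by_contra hn
  push Not at hn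
  set T : ℕ → ℝ := fun j => ∑ j' ∈ Finset.range j, d j' with hT
  have hT0 : T 0 = 0 := by simp [hT]
  have hTs : ∀ j, T (j+1) = T j + d j := fun j => Finset.sum_range_succ _ _
  have hmono : ∀ i j, i < j → j ≤ n → T i < T j := by
    intro i j hij
    induction j, hij using Nat.le_induction with
    | base => intro h; rw [hTs]; linarith [hd i (by omega)]
    | succ j _ ih => intro h; rw [hTs]; linarith [hd j (by omega), ih (by omega)]
  have halt : ∀ j < n, (Crit v₀ v (T (j+1)) ↔ ¬ Crit v₀ v (T j)) := by
    intro j hj; rw [hTs]; exact one_alt h0 (hone j hj)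
  obtain ⟨c, hc1, hc⟩ : ∃ c ≤ 1, Crit v₀ v (T c) := by
    by_cases h : Crit v₀ v (T 0)
    · exact ⟨0, by omega, h⟩
    · exact ⟨1, le_rfl, (halt 0 (by omega)).2 h⟩
  have hcr : ∀ m, c + 2 * m ≤ n → Crit v₀ v (T (c + 2 * m)) := by
    intro m
    induction m with
    | zero => intro _; exact hc
    | succ m ih =>
      intro h
      have := ih (by omega)
      have h1 := halt (c + 2 * m) (by omega)
      have h2 := halt (c + 2 * m + 1) (by omega)
      exact h2.2 (fun hh => h1.1 hh this)
  have hex : ∀ m : Fin (2 * k + 2), ∃ x : {x : Fin (k+1) × Bool // x ≠ nw k},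
      F v₀ v x.1 = yy v (T (c + 2 * m)) := by
    intro m
    obtain ⟨x, hx, hxe⟩ := hcr m (by omega)
    exact ⟨⟨x, hx⟩, hxe⟩
  choose X hX using hex
  have hcard : Fintype.card {x : Fin (k+1) × Bool // x ≠ nw k} < Fintype.card (Fin (2*k+2)) := by
    rw [Fintype.card_subtype_compl]
    simp
    omega
  obtain ⟨a, b, hab, he⟩ := Fintype.exists_ne_map_eq_of_card_lt X hcard
  have main : ∀ a b : Fin (2*k+2), a < b → X a ≠ X b := by
    intro a b hab he
    have h1 := hX a
    rw [he, hX b] at h1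
    have hab' : (a : ℕ) < b := hab
    have l1 : T (c + 2 * a) < T (c + 2 * b) := hmono _ _ (by omega) (by omega)
    have l2 : T (c + 2 * b) < T n := hmono _ _ (by omega) le_rfl
    have l3 : 0 ≤ T (c + 2 * a) := by
      rcases Nat.eq_zero_or_pos (c + 2 * a) with h | h
      · rw [h, hT0]
      · rw [← hT0]; exact (hmono _ _ h (by omega)).le
    have l4 : T n = δ := hsum
    have := yy_inj v _ _ h1.symm l1.le (by linarith)
    linarith
  rcases lt_or_gt_of_ne hab with h | h
  · exact main a b h he
  · exact main b a h he.symm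

/-- Lemma `maxpatternchange`. For any initialized pair `(v₀,v)` and
`δ ≥ 0`: (1) if `δ ≤ 1` then `v` has at most `4(k+1)` pattern changes for `δ`;
(2) if `δ ≥ 1` then `v` has at least one pattern change for `δ`;
(3) if `v` has no pattern change for `δ` then `int(v) = int(v+δ)`. -/
theorem max_pattern_change (k : ℕ) (hk : 1 ≤ k) (v₀ v : Val k)
    (hv₀ : IsVal v₀) (hv : IsVal v) (h0 : Initial v₀)
    (δ : ℝ) (hδ : 0 ≤ δ) :
    (δ ≤ 1 → ∀ n : ℕ, NChanges v₀ v n δ → n ≤ 4 * (k + 1)) ∧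
    (1 ≤ δ → ∃ n : ℕ, 1 ≤ n ∧ NChanges v₀ v n δ) ∧
    (NoChange v₀ v δ → intPart v = intPart (shift v δ)) := by
  exact ⟨fun h n hn => part1 h0 h hn, part2 h0, part3 h0 hδ⟩

end PTApaper
end

section
/- For any initialized pair (v₀,v) of clock valuations, any pattern η such that (v₀,v) has pattern η, and any clock constraint c: v satisfies c iff int(v) satisfies c^η. -/
open scoped BigOperators

namespace PTApaper

theorem pos_spec {k : ℕ} {η : PatSeq k} (h : IsPattern η) (x : Fin (k+1) × Bool) :
    ∃ m : Fin η.length, (m : ℕ) = posOf η x ∧ x ∈ η.get m := by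
  have hx := h.2.2.2.2 x
  have hlt : posOf η x < η.length := by
    unfold posOf
    rw [List.findIdx_lt_length]
    obtain ⟨p, hp, hxp⟩ := hx
    exact ⟨p, hp, by simpa using hxp⟩
  refine ⟨⟨posOf η x, hlt⟩, rfl, ?_⟩
  have := List.findIdx_getElem (xs := η) (p := fun p => decide (x ∈ p)) (w := hlt)
  exact of_decide_eq_true this

theorem pos_ord {k : ℕ} {v₀ v : Val k} {η : PatSeq k} (h : PatternOf v₀ v η)
    (a b : Fin (k+1)) :
    (posOf η (a, true) = posOf η (b, true) ↔ relFract v a = relFract v b) ∧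
    (posOf η (a, true) < posOf η (b, true) ↔ relFract v a < relFract v b) := by
  obtain ⟨m, hm, hma⟩ := pos_spec h.1 (a, true)
  obtain ⟨m', hm', hmb⟩ := pos_spec h.1 (b, true)
  have := h.2 m m' true true a b hma hmb
  simp only [bval] at this
  rw [← hm, ← hm', this.1, this.2]
  exact ⟨by rw [Fin.ext_iff], Iff.rfl⟩

theorem rel_cases {k : ℕ} (v : Val k) :
    ∃ r : ℝ, 0 ≤ r ∧ r < 1 ∧ relFract v 0 = r ∧ ∀ i : Fin k,
      (Int.fract (v i.succ) + r < 1 ∧ relFract v i.succ = Int.fract (v i.succ) + r) ∨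
      (1 ≤ Int.fract (v i.succ) + r ∧ relFract v i.succ = Int.fract (v i.succ) + r - 1) := by
  refine ⟨Int.fract (1 - Int.fract (v 0)), Int.fract_nonneg _, Int.fract_lt_one _,
    by simp [relFract], fun i => ?_⟩
  have hr0 := Int.fract_nonneg (1 - Int.fract (v 0))
  have hr1 := Int.fract_lt_one (1 - Int.fract (v 0))
  have hf0 := Int.fract_nonneg (v i.succ)
  have hf1 := Int.fract_lt_one (v i.succ)
  have e : relFract v i.succ
      = Int.fract (Int.fract (v i.succ) + Int.fract (1 - Int.fract (v 0))) := by
    simp [relFract, Fin.succ_ne_zero]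
  rw [e]
  generalize Int.fract (1 - Int.fract (v 0)) = r at *
  generalize Int.fract (v i.succ) = f at *
  rcases lt_or_ge (f + r) 1 with h | h
  · exact Or.inl ⟨h, Int.fract_eq_self.2 ⟨by linarith, h⟩⟩
  · refine Or.inr ⟨h, ?_⟩
    rw [← Int.fract_sub_one]
    exact Int.fract_eq_self.2 ⟨by linarith, by linarith⟩

theorem fracEq_iff {k : ℕ} {v₀ v : Val k} {η : PatSeq k} (h : PatternOf v₀ v η) (i j : Fin k) :
    fracEqP η i.succ j.succ ↔ Int.fract (v i.succ) = Int.fract (v j.succ) := by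
  obtain ⟨r, h0, h1, e0, H⟩ := rel_cases v
  have hi := H i
  have hj := H j
  have a1 := Int.fract_nonneg (v i.succ)
  have a2 := Int.fract_lt_one (v i.succ)
  have b1 := Int.fract_nonneg (v j.succ)
  have b2 := Int.fract_lt_one (v j.succ)
  rw [fracEqP, (pos_ord h _ _).1]
  rcases hi with ⟨hi, ei⟩ | ⟨hi, ei⟩ <;> rcases hj with ⟨hj, ej⟩ | ⟨hj, ej⟩ <;> rw [ei, ej] <;>
    constructor <;> intro <;> linarith

theorem fracZero_iff {k : ℕ} {v₀ v : Val k} {η : PatSeq k} (h : PatternOf v₀ v η) (i : Fin k) :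
    fracZeroP η i.succ ↔ Int.fract (v i.succ) = 0 := by
  obtain ⟨r, h0, h1, e0, H⟩ := rel_cases v
  have hi := H i
  have a1 := Int.fract_nonneg (v i.succ)
  have a2 := Int.fract_lt_one (v i.succ)
  rw [fracZeroP, (pos_ord h _ _).1, e0]
  rcases hi with ⟨hi, ei⟩ | ⟨hi, ei⟩ <;> rw [ei] <;>
    constructor <;> intro <;> linarith

theorem fracGt_iff {k : ℕ} {v₀ v : Val k} {η : PatSeq k} (h : PatternOf v₀ v η) (i j : Fin k) :
    fracGtP η i.succ j.succ ↔ Int.fract (v j.succ) < Int.fract (v i.succ) := by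
  obtain ⟨r, h0, h1, e0, H⟩ := rel_cases v
  have hi := H i
  have hj := H j
  have a1 := Int.fract_nonneg (v i.succ)
  have a2 := Int.fract_lt_one (v i.succ)
  have b1 := Int.fract_nonneg (v j.succ)
  have b2 := Int.fract_lt_one (v j.succ)
  simp only [fracGtP, ← not_lt (a := posOf η (j.succ, true)), (pos_ord h _ _).2, e0]
  rw [not_lt]
  generalize Int.fract (v i.succ) = f at *
  generalize Int.fract (v j.succ) = g at *
  generalize relFract v i.succ = f' at *
  generalize relFract v j.succ = g' at *
  constructor
  · rintro (⟨_, _⟩ | ⟨_, _⟩ | ⟨_, _⟩) <;>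
    rcases hi with ⟨hi, ei⟩ | ⟨hi, ei⟩ <;> rcases hj with ⟨hj, ej⟩ | ⟨hj, ej⟩ <;> linarith
  · intro hlt
    rcases hi with ⟨hi, ei⟩ | ⟨hi, ei⟩ <;> rcases hj with ⟨hj, ej⟩ | ⟨hj, ej⟩
    · exact Or.inr (Or.inr ⟨by linarith, by linarith⟩)
    · linarith
    · exact Or.inl ⟨by linarith, by linarith⟩
    · exact Or.inr (Or.inl ⟨by linarith, by linarith⟩)

theorem int_lt_split (m n : ℤ) : m < n ∧ (m : ℝ) + 1 ≤ n ∨ m = n ∧ (m : ℝ) = n ∨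
    n < m ∧ (n : ℝ) + 1 ≤ m := by
  rcases lt_trichotomy m n with h | h | h
  · exact Or.inl ⟨h, by exact_mod_cast h⟩
  · exact Or.inr (Or.inl ⟨h, by rw [h]⟩)
  · exact Or.inr (Or.inr ⟨h, by exact_mod_cast h⟩)

/-- Lemma `tests`(1). If the initialized pair `(v₀,v)` has pattern
`η`, then for every clock constraint `c`: `v ∈ c` iff `int(v) ∈ c^η`. -/
theorem test_via_pattern (k : ℕ) (hk : 1 ≤ k) (v₀ v : Val k)
    (hv₀ : IsVal v₀) (hv : IsVal v) (h0 : Initial v₀)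
    (η : PatSeq k) (hη : PatternOf v₀ v η) (c : CC k) :
    c.sat v ↔ c.satP η (intPart v) := by
  have hint : ∀ i, ((intPart v i : ℕ) : ℤ) = ⌊v i⌋ := fun i =>
    Int.toNat_of_nonneg (Int.floor_nonneg.2 (hv i))
  induction c with
  | diff i j op d =>
    have a1 := Int.fract_nonneg (v i.succ)
    have a2 := Int.fract_lt_one (v i.succ)
    have b1 := Int.fract_nonneg (v j.succ)
    have b2 := Int.fract_lt_one (v j.succ)
    have a3 := Int.floor_add_fract (v i.succ)
    have b3 := Int.floor_add_fract (v j.succ)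
    have key := int_lt_split (⌊v i.succ⌋ - ⌊v j.succ⌋) d
    push_cast at key
    cases op <;>
      simp only [CC.sat, CC.satP, CCmp.evalR, fracGt_iff hη, fracEq_iff hη, hint] <;>
      rcases key with ⟨h, h'⟩ | ⟨h, h'⟩ | ⟨h, h'⟩ <;>
      grind
  | single i op d =>
    have a1 := Int.fract_nonneg (v i.succ)
    have a2 := Int.fract_lt_one (v i.succ)
    have a3 := Int.floor_add_fract (v i.succ)
    have key := int_lt_split (⌊v i.succ⌋) d
    push_cast at key
    cases op <;>
      simp only [CC.sat, CC.satP, CCmp.evalR, fracZero_iff hη, hint] <;>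
      rcases key with ⟨h, h'⟩ | ⟨h, h'⟩ | ⟨h, h'⟩ <;>
      grind
  | not c ih => simp only [CC.sat, CC.satP, ih]
  | and c₁ c₂ ih₁ ih₂ => simp only [CC.sat, CC.satP, ih₁, ih₂]

end PTApaper
end

section
/- For any initialized pair (v₀,v) of clock valuations and any δ > 0 such that v has at most one pattern change for δ, and for any clock constraint c: (for all 0 ≤ δ' ≤ δ, v+δ' satisfies c) iff (v satisfies c and v+δ satisfies c). -/
open scoped BigOperators

namespace PTApaper

theorem aux_relFract {k : ℕ} (v : Val k) (i : Fin k) :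
    relFract v i.succ = relFract v 0 ↔ ∃ z : ℤ, v i.succ = z := by
  have h : (relFract v i.succ = relFract v 0) ↔
      Int.fract (Int.fract (v i.succ) + Int.fract (1 - Int.fract (v 0)))
        = Int.fract (1 - Int.fract (v 0)) := by
    simp [relFract, Fin.succ_ne_zero]
  rw [h]
  constructor
  · intro h
    have h2 : Int.fract (Int.fract (v i.succ) + Int.fract (1 - Int.fract (v 0)))
        = Int.fract (Int.fract (1 - Int.fract (v 0))) := by
      rw [h, Int.fract_fract]
    obtain ⟨z, hz⟩ := Int.fract_eq_fract.1 h2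
    refine ⟨z + ⌊v i.succ⌋, ?_⟩
    have := Int.fract_add_floor (v i.succ)
    push_cast
    linarith
  · rintro ⟨z, hz⟩
    rw [hz, Int.fract_intCast, zero_add, Int.fract_fract]

theorem aux_pat {k : ℕ} {v₀ v w : Val k} {η : PatSeq k}
    (h1 : PatternOf v₀ v η) (h2 : PatternOf v₀ w η) (i : Fin k)
    (h : ∃ z : ℤ, v i.succ = z) : ∃ z : ℤ, w i.succ = z := by
  rw [← aux_relFract] at h ⊢
  obtain ⟨p, hp, hip⟩ := h1.1.2.2.2.2 (i.succ, true)
  obtain ⟨q, hq, hiq⟩ := h1.1.2.2.2.2 (0, true)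
  obtain ⟨m, rfl⟩ := List.mem_iff_get.1 hp
  obtain ⟨n, rfl⟩ := List.mem_iff_get.1 hq
  have e1 := (h1.2 m n true true _ _ hip hiq).1
  have e2 := (h2.2 m n true true _ _ hip hiq).1
  exact e2.2 (e1.1 h)

theorem aux_sat {k : ℕ} (a b : Val k)
    (hd : ∀ i j : Fin k, a i.succ - a j.succ = b i.succ - b j.succ)
    (hs : ∀ (i : Fin k) (d : ℕ), (a i.succ < d ∧ b i.succ < d) ∨
      (a i.succ = d ∧ b i.succ = d) ∨ ((d : ℝ) < a i.succ ∧ (d : ℝ) < b i.succ))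
    (c : CC k) : c.sat a ↔ c.sat b := by
  induction c with
  | diff i j op d => simp only [CC.sat, hd]
  | single i op d =>
    have := hs i d
    cases op <;> simp only [CC.sat, CCmp.evalR] <;> grind
  | not c ih => simp only [CC.sat, ih]
  | and c₁ c₂ ih1 ih2 => simp only [CC.sat, ih1, ih2]

theorem aux_const {k : ℕ} {v₀ v : Val k} {η : PatSeq k} {s t : ℝ} (hst : s ≤ t)
    (h : ∀ u, s ≤ u → u ≤ t → PatternOf v₀ (shift v u) η) (c : CC k) :
    c.sat (shift v s) ↔ c.sat (shift v t) := by
  rcases hst.eq_or_lt with rfl | hlt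
  · rfl
  have key : ∀ (i : Fin k) (u : ℝ), s ≤ u → u ≤ t → ∀ z : ℤ, v i.succ + u ≠ z := by
    intro i u h1 h2 z hz
    have hu : ∃ z : ℤ, shift v u i.succ = z := ⟨z, hz⟩
    have hm1 : s ≤ min t (s + 1/2) := le_min hst (by linarith)
    have hm2 : s < min t (s + 1/2) := lt_min hlt (by linarith)
    have hm3 : min t (s + 1/2) ≤ s + 1/2 := min_le_right _ _
    obtain ⟨x, hx⟩ := aux_pat (h u h1 h2) (h s le_rfl hst) i hu
    obtain ⟨y, hy⟩ := aux_pat (h u h1 h2) (h _ hm1 (min_le_left _ _)) i hu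
    simp only [shift] at hx hy
    have l1 : (x : ℝ) < y := by linarith
    have l2 : (y : ℝ) < x + 1 := by linarith
    have l1' : x < y := by exact_mod_cast l1
    have l2' : y < x + 1 := by exact_mod_cast l2
    omega
  apply aux_sat
  · intro i j
    simp [shift]
  · intro i d
    simp only [shift]
    rcases lt_trichotomy (v i.succ + t) d with h1 | h1 | h1
    · left; exact ⟨by linarith, h1⟩
    · exact absurd h1 (by exact_mod_cast key i t hst le_rfl d)
    · right; right
      refine ⟨?_, h1⟩
      by_contra hc
      exact key i (d - v i.succ) (by linarith) (by linarith) d (by push_cast; ring)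

/-- Lemma `tests`(2). If `(v₀,v)` is an initialized pair, `δ > 0`, and
`v` has at most one pattern change for `δ`, then for every clock constraint `c`:
`∀ 0 ≤ δ' ≤ δ, v+δ' ∈ c` iff (`v ∈ c` and `v+δ ∈ c`). -/
theorem test_endpoints (k : ℕ) (hk : 1 ≤ k) (v₀ v : Val k)
    (hv₀ : IsVal v₀) (hv : IsVal v) (h0 : Initial v₀)
    (δ : ℝ) (hδ : 0 < δ)
    (hchange : NoChange v₀ v δ ∨ OneChange v₀ v δ) (c : CC k) :
    (∀ δ', 0 ≤ δ' → δ' ≤ δ → c.sat (shift v δ')) ↔ (c.sat v ∧ c.sat (shift v δ)) := by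
  have hz : shift v 0 = v := by
    funext i
    simp [shift]
  constructor
  · intro h
    exact ⟨hz ▸ h 0 le_rfl hδ.le, h δ hδ.le le_rfl⟩
  rintro ⟨h1, h2⟩ t ht0 htδ
  rcases ht0.eq_or_lt with rfl | ht0'
  · rwa [hz]
  rcases htδ.eq_or_lt with rfl | htδ'
  · exact h2
  rcases hchange with ⟨η, -, hη⟩ | ⟨η, η', hη, hη', -, hm | hm⟩
  · exact (aux_const htδ (fun u a b => hη u (by linarith) b) c).2 h2
  · refine (aux_const (v₀ := v₀) (η := η) ht0 (fun u a b => ?_) c).1 (hz.symm ▸ h1)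
    rcases a.eq_or_lt with rfl | a'
    · rwa [hz]
    · exact hm u a' (by linarith)
  · refine (aux_const (v₀ := v₀) (η := η') htδ (fun u a b => ?_) c).2 h2
    rcases b.eq_or_lt with rfl | b'
    · exact hη'
    · exact hm u (by linarith) b'

end PTApaper
end

section
/- For any initialized pairs (v₀¹,v₁) and (v₀²,v₂) of clock valuations with (v₀¹,v₁) ≈ (v₀²,v₂), and for any clock constraint c: v₁ satisfies c iff v₂ satisfies c. -/
open scoped BigOperators

namespace PTApaper


lemma te_ord {k : ℕ} {va vb vc vd : Val k} (heq : PairEquiv va vb vc vd) (x y : Fin (k+1)) :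
    relFract vb x < relFract vb y ↔ relFract vd x < relFract vd y := by
  obtain ⟨⟨η, ⟨hp, h1⟩, ⟨_, h2⟩⟩, _, _⟩ := heq
  obtain ⟨p, hpm, hx⟩ := hp.2.2.2.2 (x, true)
  obtain ⟨q, hqm, hy⟩ := hp.2.2.2.2 (y, true)
  obtain ⟨m, rfl⟩ := List.get_of_mem hpm
  obtain ⟨m', rfl⟩ := List.get_of_mem hqm
  exact (h1 m m' true true x y hx hy).2.trans (h2 m m' true true x y hx hy).2.symm

lemma te_rel {k : ℕ} (v : Val k) (i : Fin k) :
    (relFract v i.succ = Int.fract (v i.succ) + relFract v 0 ∧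
      relFract v 0 ≤ relFract v i.succ) ∨
    (relFract v i.succ = Int.fract (v i.succ) + relFract v 0 - 1 ∧
      relFract v i.succ < relFract v 0) := by
  have h0 : relFract v 0 = Int.fract (1 - Int.fract (v 0)) := by simp [relFract]
  have hi : relFract v i.succ = Int.fract (Int.fract (v i.succ) + relFract v 0) := by
    rw [h0]; simp [relFract, Fin.succ_ne_zero]
  have b1 := Int.fract_nonneg (v i.succ)
  have b2 := Int.fract_lt_one (v i.succ)
  have b3 : 0 ≤ relFract v 0 := by rw [h0]; exact Int.fract_nonneg _
  have b4 : relFract v 0 < 1 := by rw [h0]; exact Int.fract_lt_one _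
  by_cases h : Int.fract (v i.succ) + relFract v 0 < 1
  · left
    have : relFract v i.succ = Int.fract (v i.succ) + relFract v 0 := by
      rw [hi]; exact Int.fract_eq_self.2 ⟨by linarith, h⟩
    exact ⟨this, by linarith⟩
  · right
    have : relFract v i.succ = Int.fract (v i.succ) + relFract v 0 - 1 := by
      rw [hi]
      exact Int.fract_eq_iff.2 ⟨by linarith, by linarith, 1, by push_cast; ring⟩
    exact ⟨this, by linarith⟩

lemma te_bd {k : ℕ} (v : Val k) (i : Fin (k+1)) : 0 ≤ relFract v i ∧ relFract v i < 1 := by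
  unfold relFract
  split_ifs <;> exact ⟨Int.fract_nonneg _, Int.fract_lt_one _⟩

lemma te_frac_lt {k : ℕ} {va vb vc vd : Val k} (heq : PairEquiv va vb vc vd) (i j : Fin k)
    (h : Int.fract (vb i.succ) < Int.fract (vb j.succ)) :
    Int.fract (vd i.succ) < Int.fract (vd j.succ) := by
  have o1 := te_ord heq i.succ j.succ
  have o2 := te_ord heq i.succ 0
  have o3 := te_ord heq j.succ 0
  have a1 := Int.fract_nonneg (vd j.succ)
  have a2 := Int.fract_lt_one (vd i.succ)
  have a3 := Int.fract_nonneg (vb i.succ)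
  have a4 := Int.fract_lt_one (vb j.succ)
  have c1 := Int.fract_lt_one (vd j.succ)
  have c2 := Int.fract_nonneg (vd i.succ)
  have g0 := te_bd vb 0
  have g1 := te_bd vb i.succ
  have g2 := te_bd vd 0
  have g3 := te_bd vd i.succ
  have g4 := te_bd vb j.succ
  have g5 := te_bd vd j.succ
  rcases te_rel vb i with ⟨e1, f1⟩ | ⟨e1, f1⟩ <;> rcases te_rel vb j with ⟨e2, f2⟩ | ⟨e2, f2⟩ <;>
  rcases te_rel vd i with ⟨e3, f3⟩ | ⟨e3, f3⟩ <;> rcases te_rel vd j with ⟨e4, f4⟩ | ⟨e4, f4⟩ <;>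
  grind

lemma te_frac_zero {k : ℕ} {va vb vc vd : Val k} (heq : PairEquiv va vb vc vd) (i : Fin k)
    (h : 0 < Int.fract (vb i.succ)) : 0 < Int.fract (vd i.succ) := by
  have o1 := te_ord heq 0 i.succ
  have o2 := te_ord heq i.succ 0
  have a2 := Int.fract_lt_one (vd i.succ)
  have a4 := Int.fract_lt_one (vb i.succ)
  have c2 := Int.fract_nonneg (vd i.succ)
  have g0 := te_bd vb 0
  have g1 := te_bd vb i.succ
  have g2 := te_bd vd 0
  have g3 := te_bd vd i.succ
  rcases te_rel vb i with ⟨e1, f1⟩ | ⟨e1, f1⟩ <;>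
  rcases te_rel vd i with ⟨e3, f3⟩ | ⟨e3, f3⟩ <;>
  grind

lemma te_symm {k : ℕ} {va vb vc vd : Val k} (heq : PairEquiv va vb vc vd) :
    PairEquiv vc vd va vb := by
  obtain ⟨⟨η, h1, h2⟩, h3, h4⟩ := heq
  exact ⟨⟨η, h2, h1⟩, h3.symm, h4.symm⟩

lemma te_floor {k : ℕ} {va vb vc vd : Val k} (hvb : IsVal vb) (hvd : IsVal vd)
    (heq : PairEquiv va vb vc vd) (i : Fin (k+1)) : ⌊vb i⌋ = ⌊vd i⌋ := by
  have h := congrFun heq.2.2 i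
  have h1 := Int.floor_nonneg.2 (hvb i)
  have h2 := Int.floor_nonneg.2 (hvd i)
  simp only [intPart] at h
  omega

lemma te_diff_lt {k : ℕ} {va vb vc vd : Val k} (hvb : IsVal vb) (hvd : IsVal vd)
    (heq : PairEquiv va vb vc vd) (i j : Fin k) (d : ℤ)
    (h : vb i.succ - vb j.succ < d) : vd i.succ - vd j.succ < d := by
  have e1 := te_floor hvb hvd heq i.succ
  have e2 := te_floor hvb hvd heq j.succ
  have b1 := Int.floor_add_fract (vb i.succ)
  have b2 := Int.floor_add_fract (vb j.succ)
  have d1 := Int.floor_add_fract (vd i.succ)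
  have d2 := Int.floor_add_fract (vd j.succ)
  have a1 := Int.fract_nonneg (vd j.succ)
  have a2 := Int.fract_lt_one (vd i.succ)
  have a3 := Int.fract_nonneg (vb i.succ)
  have a4 := Int.fract_lt_one (vb j.succ)
  rw [e1] at b1
  rw [e2] at b2
  have hle : ⌊vd i.succ⌋ - ⌊vd j.succ⌋ < d + 1 := by
    have : ((⌊vd i.succ⌋ - ⌊vd j.succ⌋ : ℤ) : ℝ) < ((d + 1 : ℤ) : ℝ) := by
      push_cast; linarith
    exact_mod_cast this
  rcases (Int.lt_add_one_iff.1 hle).lt_or_eq with hl | hl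
  · have : ((⌊vd i.succ⌋ - ⌊vd j.succ⌋ + 1 : ℤ) : ℝ) ≤ (d : ℝ) := by exact_mod_cast hl
    push_cast at this
    linarith
  · have : ((⌊vd i.succ⌋ - ⌊vd j.succ⌋ : ℤ) : ℝ) = (d : ℝ) := by exact_mod_cast hl
    push_cast at this
    have := te_frac_lt heq i j (by linarith)
    linarith

lemma te_lt {k : ℕ} {va vb vc vd : Val k} (hvb : IsVal vb) (hvd : IsVal vd)
    (heq : PairEquiv va vb vc vd) (i : Fin k) (d : ℤ)
    (h : vb i.succ < d) : vd i.succ < d := by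
  rw [← Int.floor_lt] at h ⊢
  rwa [← te_floor hvb hvd heq]

lemma te_gt {k : ℕ} {va vb vc vd : Val k} (hvb : IsVal vb) (hvd : IsVal vd)
    (heq : PairEquiv va vb vc vd) (i : Fin k) (d : ℤ)
    (h : d < vb i.succ) : d < vd i.succ := by
  have e1 := te_floor hvb hvd heq i.succ
  have b1 := Int.floor_add_fract (vb i.succ)
  have d1 := Int.floor_add_fract (vd i.succ)
  have a1 := Int.fract_nonneg (vd i.succ)
  rw [e1] at b1
  have hle : d ≤ ⌊vd i.succ⌋ := by rw [← e1]; exact Int.le_floor.2 h.le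
  rcases hle.lt_or_eq with hl | hl
  · have : (d : ℝ) < ⌊vd i.succ⌋ := by exact_mod_cast hl
    linarith
  · have : (d : ℝ) = ⌊vd i.succ⌋ := by exact_mod_cast hl
    have := te_frac_zero heq i (by linarith)
    linarith

lemma te_cmp {a b d : ℝ} (h1 : a < d ↔ b < d) (h2 : d < a ↔ d < b) (op : CCmp) :
    op.evalR a d ↔ op.evalR b d := by
  cases op <;> simp only [CCmp.evalR, ge_iff_le, gt_iff_lt]
  · exact h1
  · rw [← not_lt, ← not_lt, h2]
  · rw [eq_iff_le_not_lt, eq_iff_le_not_lt, ← not_lt, ← not_lt, h1, h2]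
  · rw [← not_lt, ← not_lt, h1]
  · exact h2

/-- Lemma `tests`(3). If `(va,vb) ≈ (vc,vd)` are initialized pairs,
then for every clock constraint `c`: `vb ∈ c` iff `vd ∈ c`. -/
theorem test_equiv (k : ℕ) (hk : 1 ≤ k) (va vb vc vd : Val k)
    (hva : IsVal va) (hvb : IsVal vb) (hvc : IsVal vc) (hvd : IsVal vd)
    (h0a : Initial va) (h0c : Initial vc)
    (heq : PairEquiv va vb vc vd) (c : CC k) :
    c.sat vb ↔ c.sat vd := by
  have hs := te_symm heq
  induction c with
  | diff i j op d =>
    refine te_cmp ?_ ?_ op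
    · exact ⟨fun h => by exact_mod_cast te_diff_lt hvb hvd heq i j d (by exact_mod_cast h),
        fun h => by exact_mod_cast te_diff_lt hvd hvb hs i j d (by exact_mod_cast h)⟩
    · constructor
      · intro h
        have := te_diff_lt hvb hvd heq j i (-d) (by push_cast; linarith)
        push_cast at this
        linarith
      · intro h
        have := te_diff_lt hvd hvb hs j i (-d) (by push_cast; linarith)
        push_cast at this
        linarith
  | single i op d =>
    refine te_cmp ?_ ?_ op
    · exact ⟨fun h => by exact_mod_cast te_lt hvb hvd heq i d (by exact_mod_cast h),
        fun h => by exact_mod_cast te_lt hvd hvb hs i d (by exact_mod_cast h)⟩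
    · exact ⟨fun h => by exact_mod_cast te_gt hvb hvd heq i d (by exact_mod_cast h),
        fun h => by exact_mod_cast te_gt hvd hvb hs i d (by exact_mod_cast h)⟩
  | not c ih => exact not_congr ih
  | and c₁ c₂ ih1 ih2 => exact and_congr ih1 ih2

end PTApaper
end

section
/- Let (v₀¹,v₁) and (v₀²,v₂) be initialized pairs of clock valuations with (v₀¹,v₁) ≈ (v₀²,v₂). For any δ₁ ≥ 0 and any clock valuation v¹ with v¹ + δ₁ = v₁, there exist δ₂ ≥ 0 and a clock valuation v² such that: (1.1) v² + δ₂ = v₂ and (v₀¹,v¹) ≈ (v₀²,v²); (1.2) v¹ is initial iff v² is initial, v¹ = v₀¹ iff v² = v₀², and for every clock constraint c, v¹ satisfies c iff v² satisfies c (and likewise v₁ satisfies c iff v₂ satisfies c); (1.3) for every clock constraint c: (for all 0 ≤ δ' ≤ δ₁, v¹+δ' satisfies c) iff (for all 0 ≤ δ' ≤ δ₂, v²+δ' satisfies c). -/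
open scoped BigOperators

namespace PTApaper

/-- order isomorphisms of the line commuting with integer translations -/
structure Good_s15 (φ : ℝ → ℝ) : Prop where
  mono : StrictMono φ
  surj : Function.Surjective φ
  add : ∀ (t : ℝ) (n : ℤ), φ (t + n) = φ t + n
  zero : φ 0 = 0

structure Link {k : ℕ} (φ : ℝ → ℝ) (v0 v w0 w : Val k) : Prop where
  base : ∀ i, φ (v0 i) = w0 i
  now : φ (-v 0) = -w 0
  diff : ∀ i, φ (v i - v 0) = w i - w 0

theorem Good_s15.fract {φ : ℝ → ℝ} (h : Good_s15 φ) (t : ℝ) :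
    φ (Int.fract t) = Int.fract (φ t) := by
  have h1 : φ t = φ (Int.fract t) + ⌊t⌋ := by
    rw [← h.add, Int.fract_add_floor]
  have h2 : 0 ≤ φ (Int.fract t) := by
    rw [← h.zero]; exact h.mono.monotone (Int.fract_nonneg t)
  have h3 : φ (Int.fract t) < 1 := by
    have : φ 1 = 1 := by simpa [h.zero] using h.add 0 1
    rw [← this]; exact h.mono (Int.fract_lt_one t)
  rw [h1, Int.fract_add_intCast, Int.fract_eq_self.2 ⟨h2, h3⟩]

theorem Good_s15.floor {φ : ℝ → ℝ} (h : Good_s15 φ) (s p : ℝ) :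
    ⌊φ s - φ p⌋ = ⌊s - p⌋ := by
  rw [Int.floor_eq_iff]
  have h1 := Int.floor_le (s - p)
  have h2 := Int.lt_floor_add_one (s - p)
  constructor
  · have : φ (p + ⌊s-p⌋) ≤ φ s := h.mono.monotone (by linarith)
    rw [h.add] at this; linarith
  · have : φ s < φ (p + (⌊s-p⌋ + 1 : ℤ)) := h.mono (by push_cast; linarith)
    rw [h.add] at this; push_cast at this; linarith

theorem relFract_zero {k : ℕ} (v : Val k) : relFract v 0 = Int.fract (-v 0) := by
  simp only [relFract, if_true]
  rw [Int.fract_eq_fract]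
  refine ⟨1 + ⌊v 0⌋, ?_⟩
  push_cast
  have := Int.fract_add_floor (v 0)
  linarith

theorem relFract_ne {k : ℕ} (v : Val k) {i : Fin (k+1)} (hi : i ≠ 0) :
    relFract v i = Int.fract (v i - v 0) := by
  have h0 := relFract_zero v
  simp only [relFract, if_true] at h0
  simp only [relFract, if_neg hi, h0]
  rw [Int.fract_eq_fract]
  refine ⟨-⌊v i⌋ - ⌊-v 0⌋, ?_⟩
  push_cast
  have := Int.fract_add_floor (v i)
  have := Int.fract_add_floor (-v 0)
  linarith

theorem relFract_init {k : ℕ} (v : Val k) (h : v 0 = 0) (i : Fin (k+1)) :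
    relFract v i = Int.fract (v i) := by
  by_cases hi : i = 0
  · subst hi; rw [relFract_zero, h]; simp
  · rw [relFract_ne v hi, h, sub_zero]

theorem relFract_nonneg {k : ℕ} (v : Val k) (i : Fin (k+1)) : 0 ≤ relFract v i := by
  by_cases hi : i = 0
  · subst hi; rw [relFract_zero]; exact Int.fract_nonneg _
  · rw [relFract_ne v hi]; exact Int.fract_nonneg _

theorem relFract_lt_one {k : ℕ} (v : Val k) (i : Fin (k+1)) : relFract v i < 1 := by
  by_cases hi : i = 0
  · subst hi; rw [relFract_zero]; exact Int.fract_lt_one _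
  · rw [relFract_ne v hi]; exact Int.fract_lt_one _

/-- relative fractional part at an index -/
noncomputable def rf {k : ℕ} (v₀ v₁ : Val k) (x : Fin (k+1) × Bool) : ℝ :=
  relFract (bval v₀ v₁ x.2) x.1

theorem Link.rf_eq {k : ℕ} {φ : ℝ → ℝ} (h : Good_s15 φ) {v0 v w0 w : Val k}
    (hl : Link φ v0 v w0 w) (hv : v0 0 = 0) (hw : w0 0 = 0) (x : Fin (k+1) × Bool) :
    φ (rf v0 v x) = rf w0 w x := by
  obtain ⟨i, b⟩ := x
  cases b
  · simp only [rf, bval]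
    rw [relFract_init _ hv, relFract_init _ hw, h.fract, hl.base]
  · simp only [rf, bval]
    by_cases hi : i = 0
    · subst hi; rw [relFract_zero, relFract_zero, h.fract, hl.now]
    · rw [relFract_ne _ hi, relFract_ne _ hi, h.fract, hl.diff]

/-- existence of patterns -/
theorem exists_pattern_s15 {k : ℕ} (v0 v w0 w : Val k) (hv : v0 0 = 0)
    (hlt : ∀ x y, rf v0 v x < rf v0 v y ↔ rf w0 w x < rf w0 w y) :
    ∃ η : PatSeq k, PatternOf v0 v η ∧ PatternOf w0 w η := by
  classical
  set r := rf v0 v with hr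
  let V : Finset ℝ := Finset.univ.image r
  let L : List ℝ := V.sort
  have hLmem : ∀ t, t ∈ L ↔ t ∈ V := fun t => Finset.mem_sort (· ≤ ·)
  have hLs : L.SortedLT := V.sortedLT_sort
  let f : ℝ → Finset (Fin (k+1) × Bool) := fun t => Finset.univ.filter (fun x => r x = t)
  have hf : ∀ x t, x ∈ f t ↔ r x = t := by intro x t; simp [f]
  have hpat : IsPattern (L.map f) := by
    refine ⟨?_, ?_, ?_, ?_, ?_⟩
    · rw [List.length_map]
      have : L.length = V.card := Finset.length_sort _
      rw [this]
      refine Finset.card_image_le.trans ?_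
      simp; omega
    · intro p hp
      obtain ⟨t, ht, rfl⟩ := List.mem_map.1 hp
      obtain ⟨x, -, hx⟩ := Finset.mem_image.1 ((hLmem t).1 ht)
      exact ⟨x, (hf x t).2 hx⟩
    · rw [List.pairwise_map]
      refine hLs.pairwise.imp ?_
      intro a b hab
      rw [Finset.disjoint_left]
      intro x hx hx'
      rw [hf] at hx hx'
      linarith
    · have h0 : r (0, false) = 0 := by
        simp only [hr, rf, bval]
        rw [relFract_init _ hv, hv]; simp
      have h0L : (0:ℝ) ∈ L := (hLmem 0).2 (Finset.mem_image.2 ⟨_, Finset.mem_univ _, h0⟩)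
      have hnn : ∀ t ∈ L, 0 ≤ t := by
        intro t ht
        obtain ⟨x, -, hx⟩ := Finset.mem_image.1 ((hLmem t).1 ht)
        rw [← hx]; exact relFract_nonneg _ _
      have hp := hLs.pairwise
      clear_value L
      cases L with
      | nil => simp at h0L
      | cons a l =>
        rw [List.pairwise_cons] at hp
        have ha : a = 0 := by
          rcases List.mem_cons.1 h0L with h | h
          · exact h.symm
          · have := hp.1 0 h
            have := hnn a (by simp)
            linarith
        simp only [List.map_cons, List.getD_cons_zero]
        rw [hf, h0, ha]
    · intro x
      refine ⟨f (r x), List.mem_map.2 ⟨r x, (hLmem _).2 (Finset.mem_image.2 ⟨x, Finset.mem_univ _, rfl⟩), rfl⟩, (hf _ _).2 rfl⟩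
  have hord : ∀ m m' : Fin (L.map f).length, ∀ x y, x ∈ (L.map f).get m → y ∈ (L.map f).get m' →
      (r x < r y ↔ (m:ℕ) < m') := by
    intro m m' x y hx hy
    have hm := m.2
    have hm' := m'.2
    simp only [List.length_map] at hm hm'
    simp only [List.get_eq_getElem, List.getElem_map, hf] at hx hy
    rw [hx, hy]
    exact (hLs.strictMono_get.lt_iff_lt (a := ⟨m, hm⟩) (b := ⟨m', hm'⟩))
  refine ⟨L.map f, ⟨hpat, ?_⟩, ⟨hpat, ?_⟩⟩
  · intro m m' b b' i i' hx hy
    have h1 := hord m m' _ _ hx hy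
    have h2 := hord m' m _ _ hy hx
    refine ⟨?_, h1⟩
    change r (i, b) = r (i', b') ↔ _
    rw [Fin.ext_iff]
    constructor
    · intro h
      rw [h] at h1 h2
      simp only [lt_irrefl, false_iff] at h1 h2
      omega
    · intro h
      have h1' := h1.not.2 (by omega)
      have h2' := h2.not.2 (by omega)
      exact le_antisymm (not_lt.1 h2') (not_lt.1 h1')
  · intro m m' b b' i i' hx hy
    have h1 := (hlt _ _).symm.trans (hord m m' _ _ hx hy)
    have h2 := (hlt _ _).symm.trans (hord m' m _ _ hy hx)
    refine ⟨?_, h1⟩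
    change rf w0 w (i, b) = rf w0 w (i', b') ↔ _
    rw [Fin.ext_iff]
    constructor
    · intro h
      rw [h] at h1 h2
      simp only [lt_irrefl, false_iff] at h1 h2
      omega
    · intro h
      have h1' := h1.not.2 (by omega)
      have h2' := h2.not.2 (by omega)
      exact le_antisymm (not_lt.1 h2') (not_lt.1 h1')

theorem Link.pairEquiv {k : ℕ} {φ : ℝ → ℝ} (h : Good_s15 φ) {v0 v w0 w : Val k}
    (hl : Link φ v0 v w0 w) (hv : v0 0 = 0) (hw : w0 0 = 0) : PairEquiv v0 v w0 w := by
  refine ⟨exists_pattern_s15 v0 v w0 w hv ?_, ?_, ?_⟩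
  · intro x y
    rw [← hl.rf_eq h hv hw, ← hl.rf_eq h hv hw, h.mono.lt_iff_lt]
  · funext i
    have := h.floor (v0 i) 0
    simp only [h.zero, sub_zero, hl.base] at this
    simp only [intPart, this]
  · funext i
    have := h.floor (v i - v 0) (-v 0)
    rw [hl.diff, hl.now] at this
    simp only [sub_neg_eq_add, sub_add_cancel] at this
    simp only [intPart, this]

theorem Link.sat {k : ℕ} {φ : ℝ → ℝ} (h : Good_s15 φ) {v0 v w0 w : Val k}
    (hl : Link φ v0 v w0 w) (c : CC k) : c.sat v ↔ c.sat w := by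
  have key : ∀ (op : CCmp) (s t : ℝ) (d : ℕ),
      op.evalR (s - t) d ↔ op.evalR (φ s - φ t) d := by
    intro op s t d
    have ha : φ (t + d) = φ t + d := by simpa using h.add t d
    have e1 : s - t < d ↔ φ s - φ t < d := by
      rw [sub_lt_iff_lt_add', sub_lt_iff_lt_add', ← ha, h.mono.lt_iff_lt]
    have e2 : d < s - t ↔ d < φ s - φ t := by
      rw [lt_sub_iff_add_lt', lt_sub_iff_add_lt', ← ha, h.mono.lt_iff_lt]
    cases op
    · exact e1
    · simp only [CCmp.evalR, ← not_lt, e2]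
    · simp only [CCmp.evalR, le_antisymm_iff, ← not_lt, e1, e2]
    · simp only [CCmp.evalR, ge_iff_le, ← not_lt, e1]
    · exact e2
  induction c with
  | diff i j op d =>
    have := key op (v i.succ - v 0) (v j.succ - v 0) d
    rw [hl.diff, hl.diff] at this
    simpa [CC.sat] using this
  | single i op d =>
    have := key op (v i.succ - v 0) (-v 0) d
    rw [hl.diff, hl.now] at this
    simpa [CC.sat] using this
  | not c ih => simp only [CC.sat, ih]
  | and c d ih1 ih2 => simp only [CC.sat, ih1, ih2]

theorem knee (m c : ℝ) (hc : 0 < c) :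
    ∃ ψ : ℝ → ℝ, StrictMono ψ ∧ Function.Surjective ψ ∧ (∀ t ≤ m, ψ t = t) ∧
      ∀ t, m ≤ t → ψ t = m + c * (t - m) := by
  refine ⟨fun t => if t ≤ m then t else m + c * (t - m), ?_, ?_, ?_, ?_⟩
  · intro a b hab
    dsimp only
    split_ifs with h1 h2 h2
    · exact hab
    · have : 0 < c * (b - m) := mul_pos hc (by linarith)
      linarith
    · linarith
    · have : c * (a - m) < c * (b - m) := mul_lt_mul_of_pos_left (by linarith) hc
      linarith
  · intro y
    by_cases hy : y ≤ m
    · exact ⟨y, by simp [hy]⟩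
    · refine ⟨m + (y - m) / c, ?_⟩
      have : 0 < (y - m) / c := div_pos (by linarith) hc
      have h2 : ¬ (m + (y - m) / c ≤ m) := by linarith
      simp only [if_neg h2]
      field_simp
      ring
  · intro t ht; simp [ht]
  · intro t ht
    dsimp only
    split_ifs with h
    · have : t = m := le_antisymm h ht
      subst this; simp
    · rfl

theorem interp {ι : Type*} [DecidableEq ι] (x y : ι → ℝ) (hxy : ∀ a b, x a < x b ↔ y a < y b)
    (s : Finset ι) :
    ∃ φ : ℝ → ℝ, StrictMono φ ∧ Function.Surjective φ ∧ ∀ a ∈ s, φ (x a) = y a := by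
  induction s using Finset.induction_on_max_value x with
  | empty => exact ⟨id, strictMono_id, Function.surjective_id, by simp⟩
  | insert a s ha hmax ih =>
    obtain ⟨φ, h1, h2, h3⟩ := ih
    rcases s.eq_empty_or_nonempty with rfl | hs
    · refine ⟨fun t => t + (y a - x a), fun p q h => by simpa using h,
        fun z => ⟨z - (y a - x a), by ring⟩, by simp⟩
    · obtain ⟨b, hb, hbm⟩ := s.exists_max_image x hs
      rcases (hmax b hb).lt_or_eq with hlt | he
      · have hy := (hxy _ _).1 hlt
        have hp : y b < φ (x a) := by rw [← h3 b hb]; exact h1 hlt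
        obtain ⟨ψ, g1, g2, g3, g4⟩ := knee (y b) ((y a - y b) / (φ (x a) - y b))
          (div_pos (by linarith) (by linarith))
        refine ⟨ψ ∘ φ, g1.comp h1, g2.comp h2, ?_⟩
        intro c hc
        rcases Finset.mem_insert.1 hc with rfl | hc
        · have : φ (x c) - y b ≠ 0 := by linarith
          simp only [Function.comp]
          rw [g4 _ hp.le]
          field_simp
          ring
        · simp only [Function.comp]
          rw [h3 c hc]
          exact g3 _ (not_lt.1 ((hxy _ _).not.1 (not_lt.2 (hbm c hc))))
      · refine ⟨φ, h1, h2, ?_⟩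
        intro c hc
        rcases Finset.mem_insert.1 hc with rfl | hc
        · rw [← he, h3 b hb]
          exact le_antisymm (not_lt.1 ((hxy _ _).not.1 he.not_gt))
            (not_lt.1 ((hxy _ _).not.1 he.ge.not_gt))
        · exact h3 c hc

theorem periodize (f : ℝ → ℝ) (h1 : StrictMono f) (h2 : Function.Surjective f)
    (h0 : f 0 = 0) (h11 : f 1 = 1) :
    Good_s15 (fun t => f (Int.fract t) + ⌊t⌋) := by
  have hn : ∀ t, 0 ≤ f (Int.fract t) := fun t => by
    rw [← h0]; exact h1.monotone (Int.fract_nonneg t)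
  have hl : ∀ t, f (Int.fract t) < 1 := fun t => by
    rw [← h11]; exact h1 (Int.fract_lt_one t)
  refine ⟨?_, ?_, ?_, ?_⟩
  · intro a b hab
    dsimp only
    rcases (Int.floor_mono hab.le).lt_or_eq with h | h
    · have : (⌊a⌋ : ℝ) + 1 ≤ ⌊b⌋ := by exact_mod_cast h
      linarith [hl a, hn b]
    · rw [h]
      have : Int.fract a < Int.fract b := by
        simp only [Int.fract, h]; linarith
      linarith [h1 this]
  · intro y
    obtain ⟨s, hs⟩ := h2 (Int.fract y)
    have s0 : 0 ≤ s := by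
      rw [← h1.le_iff_le, h0, hs]; exact Int.fract_nonneg _
    have s1 : s < 1 := by
      rw [← h1.lt_iff_lt, h11, hs]; exact Int.fract_lt_one _
    refine ⟨s + ⌊y⌋, ?_⟩
    dsimp only
    rw [Int.fract_add_intCast, Int.fract_eq_self.2 ⟨s0, s1⟩, hs, Int.floor_add_intCast,
      Int.floor_eq_zero_iff.2 ⟨s0, s1⟩, zero_add, Int.fract_add_floor]
  · intro t n
    simp only [Int.fract_add_intCast, Int.floor_add_intCast]
    push_cast; ring
  · simp [h0]

theorem PairEquiv.rf_lt {k : ℕ} {v0 v w0 w : Val k} (h : PairEquiv v0 v w0 w)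
    (x y : Fin (k+1) × Bool) : rf v0 v x < rf v0 v y ↔ rf w0 w x < rf w0 w y := by
  obtain ⟨⟨η, ⟨hp, h1⟩, ⟨-, h2⟩⟩, -, -⟩ := h
  obtain ⟨p, hpm, hx⟩ := hp.2.2.2.2 x
  obtain ⟨q, hqm, hy⟩ := hp.2.2.2.2 y
  obtain ⟨m, rfl⟩ := List.get_of_mem hpm
  obtain ⟨m', rfl⟩ := List.get_of_mem hqm
  exact (h1 m m' x.2 y.2 x.1 y.1 hx hy).2.trans (h2 m m' x.2 y.2 x.1 y.1 hx hy).2.symm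

theorem floor_eq_of_intPart {k : ℕ} {v w : Val k} (hv : IsVal v) (hw : IsVal w)
    (h : intPart v = intPart w) (i : Fin (k+1)) : ⌊v i⌋ = ⌊w i⌋ := by
  have := congrFun h i
  simp only [intPart] at this
  have := Int.floor_nonneg.2 (hv i)
  have := Int.floor_nonneg.2 (hw i)
  omega

theorem exists_link {k : ℕ} {v0 v w0 w : Val k} (hv0 : IsVal v0) (hv : IsVal v)
    (hw0 : IsVal w0) (hw : IsVal w) (hi : v0 0 = 0) (hj : w0 0 = 0)
    (h : PairEquiv v0 v w0 w) : ∃ φ, Good_s15 φ ∧ Link φ v0 v w0 w := by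
  classical
  obtain ⟨f, f1, f2, f3⟩ := interp (ι := Option (Fin (k+1) × Bool))
    (fun o => o.elim 1 (rf v0 v)) (fun o => o.elim 1 (rf w0 w)) (by
      have l1 : ∀ x, rf v0 v x < 1 := fun x => relFract_lt_one _ _
      have l2 : ∀ x, rf w0 w x < 1 := fun x => relFract_lt_one _ _
      rintro (_ | a) (_ | b)
      · simp
      · simp [(l1 b).not_gt, (l2 b).not_gt]
      · simp [l1, l2]
      · exact h.rf_lt a b) Finset.univ
  have e1 : f 1 = 1 := f3 none (Finset.mem_univ _)
  have er : ∀ x, f (rf v0 v x) = rf w0 w x := fun x => f3 (some x) (Finset.mem_univ _)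
  have e0 : f 0 = 0 := by
    have := er (0, false)
    simp only [rf, bval] at this
    rw [relFract_init _ hi, relFract_init _ hj, hi, hj] at this
    simpa using this
  have hG := periodize f f1 f2 e0 e1
  set φ : ℝ → ℝ := fun t => f (Int.fract t) + ⌊t⌋ with hφ
  have key : ∀ s t, f (Int.fract s) = Int.fract t → ∃ n : ℤ, φ s = t + n := by
    intro s t hst
    refine ⟨⌊s⌋ - ⌊t⌋, ?_⟩
    simp only [hφ, hst]
    have := Int.fract_add_floor t
    push_cast; linarith
  have hd0 : ∀ i, ∃ n : ℤ, φ (v i - v 0) = w i - w 0 + n := by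
    intro i
    by_cases h0 : i = 0
    · subst h0; exact ⟨0, by simp [hG.zero]⟩
    · apply key
      have := er (i, true)
      simp only [rf, bval] at this
      rwa [relFract_ne _ h0, relFract_ne _ h0] at this
  obtain ⟨m, hm⟩ : ∃ n : ℤ, φ (-v 0) = -w 0 + n := by
    apply key
    have := er (0, true)
    simp only [rf, bval] at this
    rwa [relFract_zero, relFract_zero] at this
  have hn : ∀ i, φ (v i - v 0) = w i - w 0 + m := by
    intro i
    obtain ⟨n, hn⟩ := hd0 i
    have hf := hG.floor (v i - v 0) (-v 0)
    rw [hn, hm] at hf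
    have e : w i - w 0 + (n:ℝ) - (-w 0 + m) = w i + ((n - m : ℤ) : ℝ) := by push_cast; ring
    rw [e, Int.floor_add_intCast, sub_neg_eq_add, sub_add_cancel,
      floor_eq_of_intPart hv hw h.2.2 i] at hf
    have : n = m := by omega
    rw [hn, this]
  have m0 : (m:ℝ) = 0 := by
    have := hn 0
    simp only [sub_self, hG.zero, zero_add] at this
    exact this.symm
  refine ⟨φ, hG, ?_, ?_, ?_⟩
  · intro i
    have := er (i, false)
    simp only [rf, bval] at this
    rw [relFract_init _ hi, relFract_init _ hj] at this
    simp only [hφ, this, floor_eq_of_intPart hv0 hw0 h.2.1 i, Int.fract_add_floor]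
  · rw [hm, m0, add_zero]
  · intro i; rw [hn, m0, add_zero]

theorem backwards_progress (k : ℕ) (hk : 1 ≤ k) (va vb vc vd : Val k)
    (hva : IsVal va) (hvb : IsVal vb) (hvc : IsVal vc) (hvd : IsVal vd)
    (h0a : Initial va) (h0c : Initial vc)
    (heq : PairEquiv va vb vc vd)
    (δ₁ : ℝ) (hδ₁ : 0 ≤ δ₁)
    (v1 : Val k) (hv1 : IsVal v1) (hshift : shift v1 δ₁ = vb) :
    ∃ δ₂ : ℝ, 0 ≤ δ₂ ∧ ∃ v2 : Val k, IsVal v2 ∧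
      shift v2 δ₂ = vd ∧ PairEquiv va v1 vc v2 ∧
      (Initial v1 ↔ Initial v2) ∧
      (v1 = va ↔ v2 = vc) ∧
      (∀ c : CC k, (c.sat v1 ↔ c.sat v2) ∧ (c.sat vb ↔ c.sat vd)) ∧
      (∀ c : CC k,
        (∀ δ', 0 ≤ δ' → δ' ≤ δ₁ → c.sat (shift v1 δ')) ↔
        (∀ δ', 0 ≤ δ' → δ' ≤ δ₂ → c.sat (shift v2 δ'))) := by
  obtain ⟨φ, hG, hL⟩ := exists_link hva hvb hvc hvd h0a h0c heq
  subst hshift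
  have hnow : φ (-(v1 0 + δ₁)) = -vd 0 := hL.now
  have hdiff : ∀ i, φ (v1 i - v1 0) = vd i - vd 0 := by
    intro i
    have := hL.diff i
    simpa [shift] using this
  set δ₂ : ℝ := φ (-v1 0) + vd 0 with hδ₂
  set v2 : Val k := fun i => vd i - δ₂ with hv2
  have hδ : 0 ≤ δ₂ := by
    have : φ (-(v1 0 + δ₁)) ≤ φ (-v1 0) := hG.mono.monotone (by linarith)
    linarith
  have hl : ∀ d e, φ (-(v1 0 + d)) = -(v2 0 + e) → Link φ va (shift v1 d) vc (shift v2 e) := by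
    intro d e hde
    refine ⟨hL.base, hde, ?_⟩
    intro i
    simp only [shift, hv2]
    have := hdiff i
    rw [show v1 i + d - (v1 0 + d) = v1 i - v1 0 by ring, this]
    ring
  have hn1 : φ (-v1 0) = -v2 0 := by simp only [hv2, hδ₂]; ring
  have hL1 : Link φ va v1 vc v2 := by
    have hz : ∀ u : Val k, shift u 0 = u := fun u => by funext i; simp [shift]
    have := hl 0 0 (by simpa using hn1)
    rwa [hz, hz] at this
  have hinit : Initial v1 ↔ Initial v2 := by
    unfold Initial
    constructor
    · intro h
      rw [h, neg_zero, hG.zero] at hn1; linarith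
    · intro h
      rw [h, neg_zero, ← hG.zero] at hn1
      have := hG.mono.injective hn1; linarith
  refine ⟨δ₂, hδ, v2, ?_, ?_, hL1.pairEquiv hG h0a h0c, hinit, ?_, ?_, ?_⟩
  · intro i
    have h1 : φ (-v1 0) ≤ φ (v1 i - v1 0) := hG.mono.monotone (by linarith [hv1 i])
    rw [hn1, hL1.diff i] at h1
    linarith
  · funext i; simp [shift, hv2]
  · constructor
    · intro h
      have i1 : v1 0 = 0 := by rw [h]; exact h0a
      have i2 : v2 0 = 0 := hinit.1 i1
      funext i
      have h1 := hL1.diff i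
      rw [i1, i2, sub_zero, sub_zero, h, hL.base] at h1
      exact h1.symm
    · intro h
      have i2 : v2 0 = 0 := by rw [h]; exact h0c
      have i1 : v1 0 = 0 := hinit.2 i2
      funext i
      have h1 := hL1.diff i
      rw [i1, i2, sub_zero, sub_zero, h, ← hL.base] at h1
      exact hG.mono.injective h1
  · intro c
    exact ⟨hL1.sat hG c, hL.sat hG c⟩
  · intro c
    have hend : φ (-(v1 0 + δ₁)) = -(v2 0 + δ₂) := by
      rw [hnow]; simp only [hv2]; ring
    constructor
    · intro H e he0 he1
      obtain ⟨s, hs⟩ := hG.surj (-(v2 0 + e))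
      have hs1 : s ≤ -v1 0 := by
        rw [← hG.mono.le_iff_le, hs, hn1]; linarith
      have hs2 : -(v1 0 + δ₁) ≤ s := by
        rw [← hG.mono.le_iff_le, hs, hend]; linarith
      have := hl (-s - v1 0) e (by rw [← hs]; congr 1; ring)
      exact (this.sat hG c).1 (H _ (by linarith) (by linarith))
    · intro H d hd0 hd1
      have h1 : φ (-(v1 0 + d)) ≤ φ (-v1 0) := hG.mono.monotone (by linarith)
      have h2 : φ (-(v1 0 + δ₁)) ≤ φ (-(v1 0 + d)) := hG.mono.monotone (by linarith)
      rw [hn1] at h1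
      rw [hend] at h2
      have := hl d (-φ (-(v1 0 + d)) - v2 0) (by ring)
      exact (this.sat hG c).2 (H _ (by linarith) (by linarith))

end PTApaper
end
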